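/- arXiv:2210.12405 — 4 statements merged into one kernel-verified Lean document; each statement's English description precedes it below -/
import Mathlib

section
/- Let M(d,2) denote the number of equivalence classes of d-dimensional extremal (0,1)-matrices of order 2. Then log₂ M(d,2) = d²(1 + o(1)) as d → ∞; that is, (log₂ M(d,2))/d² tends to 1 as d tends to infinity. -/
open Finset

/-- The sum of the entries of `k` over the hyperplane `Γ_{i,j}`. -/
def hypSum {d n : ℕ} (k : (Fin d → Fin n) → ℝ) (i : Fin d) (j : Fin n) : ℝ :=
  ∑ α ∈ Finset.univ.filter (fun α : Fin d → Fin n => α i = j), k α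

/-- `k` is a polyplex of weight `W` in the `d`-dimensional (0,1)-matrix `A` of order `n`. -/
def IsPolyplex {d n : ℕ} (A : (Fin d → Fin n) → Bool) (k : (Fin d → Fin n) → ℝ) (W : ℝ) : Prop :=
  (∀ α, 0 ≤ k α) ∧ (∀ α, A α = false → k α = 0) ∧
  (∀ i j, hypSum k i j ≤ 1) ∧ (∑ α, k α) = W

/-- `k` is a polydiagonal in `A`: a nonnegative weighting of the support whose sum over
every hyperplane equals `1`. -/
def IsPolydiagonal {d n : ℕ} (A : (Fin d → Fin n) → Bool) (k : (Fin d → Fin n) → ℝ) : Prop :=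
  (∀ α, 0 ≤ k α) ∧ (∀ α, A α = false → k α = 0) ∧ (∀ i j, hypSum k i j = 1)

def HasPolydiagonal {d n : ℕ} (A : (Fin d → Fin n) → Bool) : Prop :=
  ∃ k, IsPolydiagonal A k

/-- The matrix obtained from `A` by additionally setting the entry at `β` to `1`. -/
def addEntry {d n : ℕ} (A : (Fin d → Fin n) → Bool) (β : Fin d → Fin n) :
    (Fin d → Fin n) → Bool :=
  fun α => if α = β then true else A α

/-- `A` is extremal: it has no polydiagonal, and adding any entry creates one. -/
def IsExtremal {d n : ℕ} (A : (Fin d → Fin n) → Bool) : Prop :=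
  ¬ HasPolydiagonal A ∧ ∀ β, A β = false → HasPolydiagonal (addEntry A β)

/-- `Λ` is a hyperplane cover of `A`. -/
def IsCover {d n : ℕ} (A : (Fin d → Fin n) → Bool) (Λ : Fin d → Fin n → ℝ) : Prop :=
  (∀ i j, 0 ≤ Λ i j) ∧ ∀ α, A α = true → 1 ≤ ∑ i, Λ i (α i)

/-- The weight of a hyperplane cover. -/
def coverWeight {d n : ℕ} (Λ : Fin d → Fin n → ℝ) : ℝ := ∑ i, ∑ j, Λ i j

/-- `Λ` is an optimal hyperplane cover of `A`: a cover of minimum weight. -/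
def IsOptimalCover {d n : ℕ} (A : (Fin d → Fin n) → Bool) (Λ : Fin d → Fin n → ℝ) : Prop :=
  IsCover A Λ ∧ ∀ Λ', IsCover A Λ' → coverWeight Λ ≤ coverWeight Λ'

/-- `A` is a threshold matrix. -/
def IsThreshold {d n : ℕ} (A : (Fin d → Fin n) → Bool) : Prop :=
  ∃ Λ : Fin d → Fin n → ℝ, (∀ i j, 0 ≤ Λ i j) ∧
    ∀ α, (A α = true ↔ 1 ≤ ∑ i, Λ i (α i))

/-- `A` and `B` are equivalent: `B` is obtained from `A` by permuting directions and
permuting parallel hyperplanes, i.e. `B(α) = A(β)` where `β (π i) = σ i (α i)`. -/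
def MatEquiv {d n : ℕ} (A B : (Fin d → Fin n) → Bool) : Prop :=
  ∃ (π : Equiv.Perm (Fin d)) (σ : Fin d → Equiv.Perm (Fin n)),
    ∀ α, B α = A (fun j => σ (π.symm j) (α (π.symm j)))

/-- The rate of the hyperplane `Γ_{i,j}` of `A`: the number of ones it contains. -/
def rate {d n : ℕ} (A : (Fin d → Fin n) → Bool) (i : Fin d) (j : Fin n) : ℕ :=
  (Finset.univ.filter (fun α : Fin d → Fin n => A α = true ∧ α i = j)).card

/-- The profile of `A`: the multiset of the rates of all its `d·n` hyperplanes. -/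
def profile {d n : ℕ} (A : (Fin d → Fin n) → Bool) : Multiset ℕ :=
  (Finset.univ : Finset (Fin d × Fin n)).val.map (fun p => rate A p.1 p.2)


/-- The number of equivalence classes of d-dimensional extremal matrices of order 2. -/
noncomputable def M (d : ℕ) : ℕ :=
  Nat.card (Quot (fun A B : {A : (Fin d → Fin 2) → Bool // IsExtremal A} =>
    MatEquiv A.1 B.1))

/-!
Identify indices with the vertices of the cube `{-1, 1}^d`. A polydiagonal writes `0` as a convex
combination of support vertices, so by Hahn–Banach the support of an extremal matrix is cut out by
an open half-space `f > 0`; conversely, if `f` vanishes at no vertex, this set of vertices is the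
support of an extremal matrix, since adding `β` creates an antipodal pair.

Upper bound: sets cut out by half-spaces have VC dimension at most `d`, so the Sauer–Shelah lemma
gives at most `2 ^ (d² + d)` of them.

Lower bound: equivalence classes have at most `d! * 2 ^ d` elements, so it suffices to count
supports. Consider their traces on the half cube of vertices with first coordinate `1`. If a set of
vertices of the half cube is linearly independent and its span contains no further vertex, the
traces contain a full cube in the directions of that set, and by the dual form of the Sauer–Shelah
lemma a family has at least as many members as it has such direction sets. The columns of a rigid
`n × k` sign matrix form such a set, and with `k = n - n / L` almost all sign matrices are rigid:
if a combination with `s ≥ 2` nonzero coefficients is a sign vector, then `s` rows determine it, and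
each other row satisfies the resulting condition with probability `O(1 / √s)` by the
Littlewood–Offord inequality.
-/

section Signs

/-- The bits `0` and `1` as the signs `-1` and `1`. -/
def bitSign : Fin 2 → ℝ := ![-1, 1]

@[simp] lemma bitSign_zero : bitSign 0 = -1 := rfl

@[simp] lemma bitSign_one : bitSign 1 = 1 := rfl

lemma bitSign_injective : Function.Injective bitSign := by
  norm_num [Function.Injective, Fin.forall_fin_two]

lemma bitSign_rev (b : Fin 2) : bitSign b.rev = -bitSign b := by
  fin_cases b <;> simp

lemma abs_bitSign (b : Fin 2) : |bitSign b| = 1 := by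
  fin_cases b <;> simp

lemma exists_bitSign_eq {x : ℝ} (hx : |x| = 1) : ∃ b, bitSign b = x := by
  rcases eq_or_eq_neg_of_abs_eq hx with rfl | rfl
  · exact ⟨1, bitSign_one⟩
  · exact ⟨0, bitSign_zero⟩

variable {ι : Type*}

/-- The index `α` as a vertex of the cube `{-1, 1}^ι`. -/
def signVec (α : ι → Fin 2) : ι → ℝ := fun i => bitSign (α i)

lemma signVec_injective : Function.Injective (signVec : (ι → Fin 2) → ι → ℝ) :=
  bitSign_injective.comp_left

lemma signVec_rev_comp (α : ι → Fin 2) : signVec (Fin.rev ∘ α) = -signVec α :=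
  funext fun i => bitSign_rev (α i)

end Signs

section HalfSpaces

variable {X V : Type*} [Fintype X] [AddCommGroup V] [Module ℝ V]

/-- The set of points of `X` that the map `φ : X → V` sends to the open half-space `f > 0`. -/
noncomputable def posSet (φ : X → V) (f : Module.Dual ℝ V) : Finset X := {x | 0 < f (φ x)}

@[simp] lemma mem_posSet {φ : X → V} {f : Module.Dual ℝ V} {x : X} :
    x ∈ posSet φ f ↔ 0 < f (φ x) := by
  simp [posSet]

end HalfSpaces

section ExtremalMatrices

variable {d : ℕ}

/-- The set `supp(A)` of indices of the nonzero entries of `A`. -/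
def matSupport {n : ℕ} (A : (Fin d → Fin n) → Bool) : Finset (Fin d → Fin n) := {α | A α = true}

@[simp] lemma mem_matSupport {n : ℕ} {A : (Fin d → Fin n) → Bool} {α : Fin d → Fin n} :
    α ∈ matSupport A ↔ A α = true := by
  simp [matSupport]

lemma matSupport_injective {n : ℕ} :
    Function.Injective (matSupport : ((Fin d → Fin n) → Bool) → Finset (Fin d → Fin n)) :=
  fun A B h => funext fun α => Bool.eq_iff_iff.2 <| by simpa using Finset.ext_iff.1 h α

lemma matSupport_addEntry {n : ℕ} (A : (Fin d → Fin n) → Bool) (β : Fin d → Fin n) :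
    matSupport (addEntry A β) = insert β (matSupport A) := by
  ext α
  by_cases h : α = β <;> simp [addEntry, h]

lemma sum_smul_signVec_apply (k : (Fin d → Fin 2) → ℝ) (i : Fin d) :
    (∑ α, k α • signVec α) i = hypSum k i 1 - hypSum k i 0 := by
  rw [hypSum, hypSum, sum_filter, sum_filter, ← sum_sub_distrib, Finset.sum_apply]
  refine sum_congr rfl fun α _ => ?_
  rcases Fin.exists_fin_two.1 ⟨α i, rfl⟩ with h | h <;> simp [h, signVec]

lemma hypSum_add_hypSum (k : (Fin d → Fin 2) → ℝ) (i : Fin d) :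
    hypSum k i 1 + hypSum k i 0 = ∑ α, k α := by
  rw [hypSum, hypSum, sum_filter, sum_filter, ← sum_add_distrib]
  refine sum_congr rfl fun α _ => ?_
  rcases Fin.exists_fin_two.1 ⟨α i, rfl⟩ with h | h <;> simp [h]

lemma hypSum_eq_one_iff {k : (Fin d → Fin 2) → ℝ} (hk : ∑ α, k α = 2) :
    (∀ i j, hypSum k i j = 1) ↔ ∑ α, k α • signVec α = 0 := by
  simp only [funext_iff, sum_smul_signVec_apply, Fin.forall_fin_two, Pi.zero_apply]
  refine forall_congr' fun i => ?_
  have := (hypSum_add_hypSum k i).trans hk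
  constructor
  · intro h
    linarith [h.1, h.2]
  · intro h
    constructor <;> linarith

lemma IsPolydiagonal.sum_eq_two {A : (Fin d → Fin 2) → Bool} {k : (Fin d → Fin 2) → ℝ}
    (hk : IsPolydiagonal A k) (i : Fin d) : ∑ α, k α = 2 := by
  rw [← hypSum_add_hypSum k i, hk.2.2, hk.2.2]
  norm_num

lemma not_hasPolydiagonal_of_subset_posSet {A : (Fin d → Fin 2) → Bool} (i : Fin d)
    {f : Module.Dual ℝ (Fin d → ℝ)} (hf : matSupport A ⊆ posSet signVec f) :
    ¬ HasPolydiagonal A := by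
  rintro ⟨k, hk⟩
  have htotal : ∑ α, k α = 2 := hk.sum_eq_two i
  have hbalanced : ∑ α, k α * f (signVec α) = 0 := by
    simpa using congrArg f ((hypSum_eq_one_iff htotal).1 hk.2.2)
  have hpos (α) (hα : A α = true) : 0 < f (signVec α) := by
    simpa using hf (mem_matSupport.2 hα)
  have hnonneg (α) : 0 ≤ k α * f (signVec α) := by
    cases hA : A α
    · simp [hk.2.1 α hA]
    · exact mul_nonneg (hk.1 α) (hpos α hA).le
  have hzero (α) : k α = 0 := by
    cases hA : A α
    · exact hk.2.1 α hA
    · exact (mul_eq_zero.1 <| (sum_eq_zero_iff_of_nonneg fun α _ => hnonneg α).1 hbalanced α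
        (mem_univ α)).resolve_right (hpos α hA).ne'
  simp [hzero] at htotal

lemma hasPolydiagonal_of_zero_mem_convexHull {A : (Fin d → Fin 2) → Bool}
    (hA : (0 : Fin d → ℝ) ∈ convexHull ℝ (((matSupport A).image signVec : Finset _) : Set _)) :
    HasPolydiagonal A := by
  obtain ⟨u, hu_nonneg, hu_sum, hu_zero⟩ := Finset.mem_convexHull'.1 hA
  rw [sum_image signVec_injective.injOn] at hu_sum hu_zero
  set k : (Fin d → Fin 2) → ℝ := fun α => if α ∈ matSupport A then 2 * u (signVec α) else 0
  have htotal : ∑ α, k α = 2 := by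
    rw [sum_ite_mem, univ_inter, ← mul_sum, hu_sum, mul_one]
  have hbalanced : ∑ α, k α • signVec α = 0 := by
    simp only [k, ite_smul, zero_smul, sum_ite_mem, univ_inter, mul_smul, ← smul_sum, hu_zero,
      smul_zero]
  refine ⟨k, fun α => ?_, fun α hα => if_neg (by simp [hα]), (hypSum_eq_one_iff htotal).2 hbalanced⟩
  by_cases hα : α ∈ matSupport A
  · exact (mul_nonneg zero_le_two (hu_nonneg _ (mem_image_of_mem _ hα))).trans_eq (if_pos hα).symm
  · exact (if_neg hα).ge

lemma exists_subset_posSet_of_not_hasPolydiagonal {A : (Fin d → Fin 2) → Bool}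
    (hA : ¬ HasPolydiagonal A) :
    ∃ f : Module.Dual ℝ (Fin d → ℝ), matSupport A ⊆ posSet signVec f := by
  obtain ⟨f, u, hu, hf⟩ := geometric_hahn_banach_point_closed (convex_convexHull ℝ _)
    ((finite_toSet _).isClosed_convexHull ℝ) (mt hasPolydiagonal_of_zero_mem_convexHull hA)
  rw [map_zero] at hu
  exact ⟨f, fun α hα => mem_posSet.2 <| hu.trans <|
    hf _ (subset_convexHull ℝ _ <| mem_coe.2 <| mem_image_of_mem _ hα)⟩

lemma IsExtremal.nonempty_fin {A : (Fin d → Fin 2) → Bool} (hA : IsExtremal A) :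
    Nonempty (Fin d) := by
  by_contra h
  rw [not_nonempty_iff] at h
  exact hA.1 ⟨0, fun _ => le_rfl, fun _ _ => rfl, fun i => h.elim i⟩

lemma IsExtremal.exists_matSupport_eq_posSet {A : (Fin d → Fin 2) → Bool} (hA : IsExtremal A) :
    ∃ f : Module.Dual ℝ (Fin d → ℝ), matSupport A = posSet signVec f := by
  obtain ⟨i⟩ := hA.nonempty_fin
  obtain ⟨f, hf⟩ := exists_subset_posSet_of_not_hasPolydiagonal hA.1
  refine ⟨f, hf.antisymm fun β hβ => ?_⟩
  by_contra hβA
  refine not_hasPolydiagonal_of_subset_posSet i (f := f) ?_ (hA.2 β (by simpa using hβA))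
  rw [matSupport_addEntry]
  exact insert_subset hβ hf

lemma hasPolydiagonal_of_antipodal {A : (Fin d → Fin 2) → Bool} {β : Fin d → Fin 2}
    (hβ : A β = true) (hβ' : A (Fin.rev ∘ β) = true) : HasPolydiagonal A := by
  refine ⟨fun α => (if α = β then 1 else 0) + (if α = Fin.rev ∘ β then 1 else 0),
    fun α => by positivity, fun α hα => ?_, ?_⟩
  · have hne : α ≠ β := by
      rintro rfl
      simp_all
    have hne' : α ≠ Fin.rev ∘ β := by
      rintro rfl
      simp_all
    simp [hne, hne']
  · refine (hypSum_eq_one_iff ?_).2 ?_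
    · simp only [sum_add_distrib, sum_ite_eq', mem_univ, if_true]
      norm_num
    · simp [add_smul, sum_add_distrib, signVec_rev_comp]

lemma isExtremal_of_matSupport_eq_posSet {A : (Fin d → Fin 2) → Bool}
    {f : Module.Dual ℝ (Fin d → ℝ)} (hA : matSupport A = posSet signVec f)
    (hf : ∀ α, f (signVec α) ≠ 0) : IsExtremal A := by
  have hA' (α) : A α = true ↔ 0 < f (signVec α) := by
    rw [← mem_matSupport, hA, mem_posSet]
  obtain ⟨i⟩ : Nonempty (Fin d) := by
    by_contra h
    rw [not_nonempty_iff] at h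
    exact hf 0 (by rw [Subsingleton.elim (signVec 0) 0, map_zero])
  refine ⟨not_hasPolydiagonal_of_subset_posSet i hA.subset, fun β hβ => ?_⟩
  have hβ_neg : f (signVec β) < 0 :=
    (hf β).lt_of_le <| not_lt.1 fun h => by simp [(hA' β).2 h] at hβ
  have hβ_rev : A (Fin.rev ∘ β) = true := by
    rw [hA', signVec_rev_comp, map_neg]
    linarith
  exact hasPolydiagonal_of_antipodal (β := β) (by simp [addEntry]) (by simp [addEntry, hβ_rev])

open Classical in
/-- The supports of the extremal matrices of dimension `d` and order `2`. -/
noncomputable def extremalSupports (d : ℕ) : Finset (Finset (Fin d → Fin 2)) :=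
  ({A | IsExtremal A} : Finset ((Fin d → Fin 2) → Bool)).image matSupport

lemma matSupport_mem_extremalSupports {A : (Fin d → Fin 2) → Bool} :
    matSupport A ∈ extremalSupports d ↔ IsExtremal A := by
  simp [extremalSupports, matSupport_injective.eq_iff]

lemma card_extremalSupports (d : ℕ) :
    #(extremalSupports d) = Nat.card {A : (Fin d → Fin 2) → Bool // IsExtremal A} := by
  classical
  rw [extremalSupports, card_image_of_injective _ matSupport_injective,
    Nat.card_eq_fintype_card, Fintype.card_subtype]

lemma exists_eq_posSet_of_mem_extremalSupports {S : Finset (Fin d → Fin 2)}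
    (hS : S ∈ extremalSupports d) :
    ∃ f : Module.Dual ℝ (Fin d → ℝ), S = posSet signVec f := by
  simp only [extremalSupports, mem_image, mem_filter_univ] at hS
  obtain ⟨A, hA, rfl⟩ := hS
  exact hA.exists_matSupport_eq_posSet

lemma posSet_mem_extremalSupports {f : Module.Dual ℝ (Fin d → ℝ)} (hf : ∀ α, f (signVec α) ≠ 0) :
    posSet signVec f ∈ extremalSupports d := by
  classical
  have h : matSupport (fun α => decide (α ∈ posSet signVec f)) = posSet signVec f := by
    ext; simp
  rw [← h, matSupport_mem_extremalSupports]
  exact isExtremal_of_matSupport_eq_posSet h hf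

end ExtremalMatrices

section Shattering

variable {X : Type*}

/-- `𝓕` strongly shatters `S` if it contains a whole cube `{B ∪ P | P ⊆ S}` with directions `S`. -/
def StronglyShatters [DecidableEq X] (𝓕 : Finset (Finset X)) (S : Finset X) : Prop :=
  ∃ B, Disjoint B S ∧ ∀ P ⊆ S, B ∪ P ∈ 𝓕

lemma StronglyShatters.not_shatters_compl [Fintype X] [DecidableEq X] {𝓕 : Finset (Finset X)}
    {S : Finset X} (hS : StronglyShatters 𝓕 S) : ¬ 𝓕ᶜ.Shatters Sᶜ := by
  intro hcompl
  obtain ⟨B, hBS, hB⟩ := hS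
  obtain ⟨U, hU, hSU⟩ := hcompl (t := B) (subset_compl_iff_disjoint_right.2 hBS)
  have hU_eq : B ∪ S ∩ U = U := by
    rw [← hSU, ← union_inter_distrib_right, union_comm, union_compl, univ_inter]
  exact mem_compl.1 hU (hU_eq ▸ hB (S ∩ U) inter_subset_left)

lemma card_le_card_of_stronglyShatters [Finite X] [DecidableEq X] {𝓕 𝒢 : Finset (Finset X)}
    (h𝒢 : ∀ S ∈ 𝒢, StronglyShatters 𝓕 S) : #𝒢 ≤ #𝓕 := by
  have := Fintype.ofFinite X
  have h_disjoint : Disjoint (𝒢.image compl) 𝓕ᶜ.shatterer := by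
    simp only [Finset.disjoint_left, mem_image, mem_shatterer]
    rintro _ ⟨S, hS, rfl⟩
    exact (h𝒢 S hS).not_shatters_compl
  have h_card := card_le_univ (𝒢.image compl ∪ 𝓕ᶜ.shatterer)
  rw [card_union_of_disjoint h_disjoint, card_image_of_injective _ compl_injective] at h_card
  have h_shatterer := card_le_card_shatterer 𝓕ᶜ
  have h_compl := card_add_card_compl 𝓕
  omega

variable {V : Type*} [AddCommGroup V] [Module ℝ V] {φ : X → V}

lemma exists_relation_pos_of_not_linearIndepOn {S : Finset X} (hS : ¬ LinearIndepOn ℝ φ S) :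
    ∃ g : X → ℝ, ∑ x ∈ S, g x • φ x = 0 ∧ ∃ x ∈ S, 0 < g x := by
  obtain ⟨g, hg, x, hx, hgx⟩ := not_linearIndepOn_finset_iff.1 hS
  rcases hgx.lt_or_gt with hneg | hpos
  · exact ⟨-g, by simp [hg], x, hx, neg_pos.2 hneg⟩
  · exact ⟨g, hg, x, hx, hpos⟩

lemma exists_dual_apply_eq {S : Set X} (hS : LinearIndepOn ℝ φ S) (y : X → ℝ) :
    ∃ f : Module.Dual ℝ V, ∀ x ∈ S, f (φ x) = y x := by
  obtain ⟨f, hf⟩ := ((Module.Basis.span hS.linearIndependent).constr ℝ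
    (fun x : S => y x)).exists_extend
  refine ⟨f, fun x hx => ?_⟩
  have := LinearMap.congr_fun hf (Module.Basis.span hS.linearIndependent ⟨x, hx⟩)
  rw [Module.Basis.constr_basis] at this
  simpa [Module.Basis.span_apply] using this

lemma exists_dual_le_ker_forall_ne_zero {ι : Type*} [Finite ι] {v : ι → V} {W : Submodule ℝ V}
    (hv : ∀ i, v i ∉ W) : ∃ f : Module.Dual ℝ V, W ≤ LinearMap.ker f ∧ ∀ i, f (v i) ≠ 0 := by
  obtain ⟨f, hf⟩ := Module.exists_dual_forall_apply_ne_zero (K := ℝ) (fun i => W.mkQ (v i))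
    fun i => by simpa using hv i
  exact ⟨f ∘ₗ W.mkQ, fun w hw => by simp [(Submodule.Quotient.mk_eq_zero W).2 hw], hf⟩

variable [Fintype X]

lemma card_le_finrank_of_shatters [DecidableEq X] [FiniteDimensional ℝ V]
    {𝒜 : Finset (Finset X)} (h𝒜 : ∀ A ∈ 𝒜, ∃ f, A = posSet φ f) {S : Finset X}
    (hS : 𝒜.Shatters S) : #S ≤ Module.finrank ℝ V := by
  suffices hind : LinearIndepOn ℝ φ (S : Set X) by
    simpa using hind.linearIndependent.fintype_card_le_finrank
  by_contra hdep
  obtain ⟨g, hg, x₀, hx₀, hgx₀⟩ := exists_relation_pos_of_not_linearIndepOn hdep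
  -- Cut out of `S` exactly the points with `g > 0`: then `g` and `f ∘ φ` agree in sign on `S`.
  obtain ⟨_, hA, hSA⟩ := hS (filter_subset (0 < g ·) S)
  obtain ⟨f, rfl⟩ := h𝒜 _ hA
  have hsign (x) (hx : x ∈ S) : 0 < f (φ x) ↔ 0 < g x := by
    simpa [hx] using Finset.ext_iff.1 hSA x
  have hzero : ∑ x ∈ S, g x * f (φ x) = 0 := by
    simpa using congrArg f hg
  refine hzero.not_gt <| sum_pos' (fun x hx => ?_) ⟨x₀, hx₀, mul_pos hgx₀ ((hsign x₀ hx₀).2 hgx₀)⟩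
  by_cases hgx : 0 < g x
  · exact (mul_pos hgx ((hsign x hx).2 hgx)).le
  · exact mul_nonneg_of_nonpos_of_nonpos (not_lt.1 hgx) (not_lt.1 (mt (hsign x hx).1 hgx))

lemma card_le_of_forall_eq_posSet [FiniteDimensional ℝ V]
    {𝒜 : Finset (Finset X)} (h𝒜 : ∀ A ∈ 𝒜, ∃ f, A = posSet φ f) :
    #𝒜 ≤ ∑ j ∈ Iic (Module.finrank ℝ V), (Fintype.card X).choose j := by
  classical
  have hvc : 𝒜.vcDim ≤ Module.finrank ℝ V :=
    Finset.sup_le fun S hS => card_le_finrank_of_shatters h𝒜 (mem_shatterer.1 hS)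
  calc #𝒜 ≤ #𝒜.shatterer := card_le_card_shatterer 𝒜
    _ ≤ ∑ j ∈ Iic 𝒜.vcDim, (Fintype.card X).choose j := card_shatterer_le_sum_vcDim
    _ ≤ ∑ j ∈ Iic (Module.finrank ℝ V), (Fintype.card X).choose j :=
      sum_le_sum_of_subset (Iic_subset_Iic.2 hvc)

lemma eventually_sign_mul_add {a : ℝ} (ha : a ≠ 0) (b : ℝ) :
    ∀ᶠ t : ℝ in Filter.atTop, SignType.sign (t * a + b) = SignType.sign a := by
  rcases ha.lt_or_gt with hneg | hpos
  · have hlim : Filter.Tendsto (fun t : ℝ => t * a + b) Filter.atTop Filter.atBot :=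
      Filter.tendsto_atBot_add_const_right _ b (Filter.tendsto_id.atTop_mul_const_of_neg hneg)
    filter_upwards [hlim.eventually_lt_atBot 0] with t ht
    rw [sign_neg hneg, sign_neg ht]
  · have hlim : Filter.Tendsto (fun t : ℝ => t * a + b) Filter.atTop Filter.atTop :=
      Filter.tendsto_atTop_add_const_right _ b (Filter.tendsto_id.atTop_mul_const hpos)
    filter_upwards [hlim.eventually_gt_atTop 0] with t ht
    rw [sign_pos hpos, sign_pos ht]

-- A functional vanishing on `S` and nonzero elsewhere fixes the trace off `S`; a small perturbation
-- of it then prescribes the signs on `S` freely.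
lemma stronglyShatters_of_linearIndepOn [DecidableEq X] {𝓕 : Finset (Finset X)}
    (h𝓕 : ∀ f : Module.Dual ℝ V, (∀ x, f (φ x) ≠ 0) → posSet φ f ∈ 𝓕) {S : Finset X}
    (hS : LinearIndepOn ℝ φ (S : Set X))
    (hspan : ∀ x ∉ S, φ x ∉ Submodule.span ℝ (φ '' (S : Set X))) : StronglyShatters 𝓕 S := by
  obtain ⟨f₀, hf₀_ker, hf₀_ne⟩ :=
    exists_dual_le_ker_forall_ne_zero (fun x : {x // x ∉ S} => hspan x x.2)
  have hf₀ (x) (hx : x ∈ S) : f₀ (φ x) = 0 :=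
    hf₀_ker (Submodule.subset_span (Set.mem_image_of_mem φ hx))
  refine ⟨posSet φ f₀, Finset.disjoint_left.2 fun x hx hxS => ?_, fun P hP => ?_⟩
  · simp [hf₀ x hxS] at hx
  obtain ⟨f₁, hf₁⟩ := exists_dual_apply_eq hS fun x => if x ∈ P then 1 else -1
  obtain ⟨t, ht⟩ := (Filter.eventually_all.2 fun x : {x // x ∉ S} =>
    eventually_sign_mul_add (hf₀_ne x) (f₁ (φ x))).exists
  have h_on (x) (hx : x ∈ S) : (t • f₀ + f₁) (φ x) = if x ∈ P then 1 else -1 := by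
    simp [hf₀ x hx, hf₁ x hx]
  have h_off (x) (hx : x ∉ S) :
      SignType.sign ((t • f₀ + f₁) (φ x)) = SignType.sign (f₀ (φ x)) := ht ⟨x, hx⟩
  convert h𝓕 (t • f₀ + f₁) fun x => ?_ using 1
  · ext x
    by_cases hx : x ∈ S
    · rw [mem_union, mem_posSet, mem_posSet, h_on x hx, hf₀ x hx]
      by_cases hxP : x ∈ P <;> simp [hxP]
    · rw [mem_union, mem_posSet, mem_posSet, ← sign_eq_one_iff, ← sign_eq_one_iff, h_off x hx]
      exact or_iff_left fun h => hx (hP h)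
  · by_cases hx : x ∈ S
    · rw [h_on x hx]
      split_ifs <;> norm_num
    · rw [← sign_ne_zero, h_off x hx, sign_ne_zero]
      exact hf₀_ne ⟨x, hx⟩

end Shattering

section EquivalenceClasses

variable {d n : ℕ}

lemma MatEquiv.refl (A : (Fin d → Fin n) → Bool) : MatEquiv A A :=
  ⟨1, 1, fun _ => rfl⟩

lemma MatEquiv.symm {A B : (Fin d → Fin n) → Bool} (h : MatEquiv A B) : MatEquiv B A := by
  obtain ⟨π, σ, h⟩ := h
  exact ⟨π.symm, fun j => (σ (π.symm j)).symm, fun α => by simp [h]⟩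

lemma MatEquiv.trans {A B C : (Fin d → Fin n) → Bool} (hAB : MatEquiv A B) (hBC : MatEquiv B C) :
    MatEquiv A C := by
  obtain ⟨π, σ, hAB⟩ := hAB
  obtain ⟨π', σ', hBC⟩ := hBC
  exact ⟨π'.trans π, fun i => (σ' i).trans (σ (π' i)), fun α => by simp [hAB, hBC]⟩

lemma card_filter_matEquiv_le (A : (Fin d → Fin n) → Bool)
    [DecidablePred (MatEquiv A)] :
    #{B : (Fin d → Fin n) → Bool | MatEquiv A B} ≤ d.factorial * n.factorial ^ d := by
  classical
  let relabel (p : Equiv.Perm (Fin d) × (Fin d → Equiv.Perm (Fin n))) (α : Fin d → Fin n) : Bool :=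
    A fun j => p.2 (p.1.symm j) (α (p.1.symm j))
  calc #{B : (Fin d → Fin n) → Bool | MatEquiv A B} ≤ #(univ.image relabel) := by
        refine card_le_card fun B hB => ?_
        obtain ⟨π, σ, h⟩ := (mem_filter_univ B).1 hB
        exact mem_image.2 ⟨(π, σ), mem_univ _, (funext h).symm⟩
    _ ≤ Fintype.card (Equiv.Perm (Fin d) × (Fin d → Equiv.Perm (Fin n))) := card_image_le
    _ = d.factorial * n.factorial ^ d := by simp [Fintype.card_perm]

/-- Equivalence of extremal matrices of order `2`; the number of its classes is `M d`. -/
def extremalSetoid (d : ℕ) : Setoid {A : (Fin d → Fin 2) → Bool // IsExtremal A} where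
  r A B := MatEquiv A.1 B.1
  iseqv := ⟨fun A => .refl A.1, .symm, .trans⟩

lemma M_le_card_extremalSupports (d : ℕ) : M d ≤ #(extremalSupports d) :=
  (card_extremalSupports d).symm ▸ Nat.card_le_card_of_surjective (Quot.mk _) Quot.mk_surjective

lemma card_extremalSupports_le_mul_M (d : ℕ) :
    #(extremalSupports d) ≤ d.factorial * 2 ^ d * M d := by
  classical
  rw [card_extremalSupports, show M d = Nat.card (Quotient (extremalSetoid d)) from rfl,
    Nat.card_eq_fintype_card, Nat.card_eq_fintype_card, ← card_univ, ← card_univ]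
  refine card_le_mul_card_image_of_maps_to (f := Quotient.mk _) (fun _ _ => mem_univ _) _ ?_
  rintro ⟨A⟩ -
  calc #{B | Quotient.mk (extremalSetoid d) B = Quotient.mk _ A}
      ≤ #{B : (Fin d → Fin 2) → Bool | MatEquiv A.1 B} :=
        card_le_card_of_injOn Subtype.val
          (fun B hB => by
            simpa using MatEquiv.symm (Quotient.exact ((mem_filter_univ B).1 hB)))
          Subtype.val_injective.injOn
    _ ≤ d.factorial * 2 ^ d := card_filter_matEquiv_le A.1

end EquivalenceClasses

section UpperBound

lemma card_extremalSupports_le (d : ℕ) : #(extremalSupports d) ≤ 2 ^ (d * (d + 1)) := by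
  have hchoose (j) (hj : j ∈ Iic d) : (Fintype.card (Fin d → Fin 2)).choose j ≤ 2 ^ (d * d) :=
    calc (Fintype.card (Fin d → Fin 2)).choose j ≤ (2 ^ d) ^ j := by
          simpa using Nat.choose_le_pow (2 ^ d) j
      _ ≤ 2 ^ (d * d) := by
          rw [← pow_mul]
          exact Nat.pow_le_pow_right two_pos (Nat.mul_le_mul_left d (mem_Iic.1 hj))
  calc #(extremalSupports d) ≤ ∑ j ∈ Iic d, (Fintype.card (Fin d → Fin 2)).choose j := by
        simpa using card_le_of_forall_eq_posSet (V := Fin d → ℝ)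
          fun S hS => exists_eq_posSet_of_mem_extremalSupports hS
    _ ≤ #(Iic d) * 2 ^ (d * d) := sum_le_card_nsmul _ _ _ hchoose
    _ ≤ 2 ^ d * 2 ^ (d * d) := by
        rw [Nat.card_Iic]
        exact Nat.mul_le_mul_right _ Nat.lt_two_pow_self
    _ = 2 ^ (d * (d + 1)) := by ring

lemma logb_M_le (d : ℕ) : Real.logb 2 (M d) ≤ (d : ℝ) ^ 2 + d := by
  rcases (M d).eq_zero_or_pos with hM | hM
  · rw [hM, Nat.cast_zero, Real.logb_zero]
    positivity
  · rw [Real.logb_le_iff_le_rpow one_lt_two (by exact_mod_cast hM)]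
    calc (M d : ℝ) ≤ 2 ^ (d * (d + 1)) := by
          exact_mod_cast (M_le_card_extremalSupports d).trans (card_extremalSupports_le d)
      _ = (2 : ℝ) ^ ((d : ℝ) ^ 2 + d) := by
          rw [← Real.rpow_natCast]
          push_cast
          ring_nf

end UpperBound

section RigidMatrices

open Matrix

variable {ι κ : Type*} [Fintype κ]

/-- A sign matrix `N` is rigid if a linear combination of its columns is again a sign vector only
when at most one column takes part in it. -/
def IsRigid (N : ι → κ → Fin 2) : Prop :=
  ∀ c : κ → ℝ, (∀ i, |c ⬝ᵥ signVec (N i)| = 1) → (Function.support c).Subsingleton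

lemma eq_single_of_support_subsingleton [DecidableEq κ] {c : κ → ℝ} {j : κ}
    (hc : (Function.support c).Subsingleton) (hj : c j ≠ 0) : c = Pi.single j (∑ l, c l) := by
  have hzero (l) (hl : l ≠ j) : c l = 0 := by
    by_contra h
    exact hl (hc h hj)
  rw [Fintype.sum_eq_single j hzero]
  ext l
  by_cases h : l = j
  · rw [h, Pi.single_eq_same]
  · rw [Pi.single_eq_of_ne h, hzero l h]

lemma IsRigid.exists_eq_single [DecidableEq κ] {N : ι → κ → Fin 2} (hN : IsRigid N) {c : κ → ℝ}
    (hsum : ∑ j, c j = 1) (hc : ∀ i, |c ⬝ᵥ signVec (N i)| = 1) : ∃ j, c = Pi.single j 1 := by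
  obtain ⟨j, -, hj⟩ := exists_ne_zero_of_sum_ne_zero (hsum ▸ one_ne_zero : ∑ j, c j ≠ 0)
  exact ⟨j, hsum ▸ eq_single_of_support_subsingleton (hN c hc) hj⟩

-- If `c ≠ 0` were such a relation, adding a multiple of it to a column `j` with `c j ≠ 0` would
-- write that column as a combination of at least two columns.
lemma IsRigid.eq_zero {N : ι → κ → Fin 2} (hN : IsRigid N) {c : κ → ℝ}
    (hsum : ∑ j, c j = 0) (hc : ∀ i, c ⬝ᵥ signVec (N i) = 0) : c = 0 := by
  classical
  by_contra hne
  obtain ⟨j, hj⟩ := Function.ne_iff.1 hne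
  rw [Pi.zero_apply] at hj
  set e : κ → ℝ := Pi.single j 1 + (c j)⁻¹ • c
  have he_sum : ∑ l, e l = 1 := by
    simp [e, sum_add_distrib, ← mul_sum, hsum]
  have he_j : e j = 2 := by
    simp [e, hj, one_add_one_eq_two]
  have he_support : (Function.support e).Subsingleton :=
    hN e fun i => by simp [e, add_dotProduct, hc i, signVec, abs_bitSign]
  have he_single := eq_single_of_support_subsingleton he_support (he_j ▸ two_ne_zero)
  rw [he_sum] at he_single
  simpa [he_j] using congrFun he_single j

variable {n : ℕ}

/-- The vertex `(1, x)` of `{-1, 1}^(n+1)`. These vertices represent the antipodal pairs. -/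
def halfCubeVec (x : Fin n → Fin 2) : Fin (n + 1) → ℝ :=
  signVec (Fin.cons 1 x : Fin (n + 1) → Fin 2)

@[simp] lemma halfCubeVec_zero (x : Fin n → Fin 2) : halfCubeVec x 0 = 1 := rfl

@[simp] lemma halfCubeVec_succ (x : Fin n → Fin 2) (i : Fin n) :
    halfCubeVec x i.succ = bitSign (x i) := rfl

lemma halfCubeVec_injective :
    Function.Injective (halfCubeVec : (Fin n → Fin 2) → Fin (n + 1) → ℝ) :=
  signVec_injective.comp (Fin.cons_right_injective _)

lemma ne_zero_of_forall_halfCubeVec_ne_zero {f : Module.Dual ℝ (Fin (n + 1) → ℝ)}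
    (hf : ∀ x, f (halfCubeVec x) ≠ 0) (α : Fin (n + 1) → Fin 2) : f (signVec α) ≠ 0 := by
  have htail (β : Fin (n + 1) → Fin 2) (hβ : β 0 = 1) : f (signVec β) ≠ 0 := by
    simpa [halfCubeVec, ← hβ, Fin.cons_self_tail] using hf (Fin.tail β)
  rcases Fin.exists_fin_two.1 ⟨α 0, rfl⟩ with h | h
  · simpa [signVec_rev_comp] using htail (Fin.rev ∘ α) (by simp [h])
  · exact htail α h

/-- The traces of the extremal supports on the half cube of indices beginning with `1`. -/
noncomputable def halfCubeTraces (n : ℕ) : Finset (Finset (Fin n → Fin 2)) :=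
  (extremalSupports (n + 1)).image fun S => ({x | Fin.cons 1 x ∈ S} : Finset (Fin n → Fin 2))

lemma posSet_mem_halfCubeTraces {f : Module.Dual ℝ (Fin (n + 1) → ℝ)}
    (hf : ∀ x, f (halfCubeVec x) ≠ 0) : posSet halfCubeVec f ∈ halfCubeTraces n :=
  mem_image.2 ⟨_, posSet_mem_extremalSupports (ne_zero_of_forall_halfCubeVec_ne_zero hf), by
    ext x
    simp [halfCubeVec]⟩

lemma sum_smul_halfCubeVec_zero (N : Fin n → κ → Fin 2) (c : κ → ℝ) :
    (∑ j, c j • halfCubeVec fun i => N i j) 0 = ∑ j, c j := by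
  simp [Finset.sum_apply]

lemma sum_smul_halfCubeVec_succ (N : Fin n → κ → Fin 2) (c : κ → ℝ) (i : Fin n) :
    (∑ j, c j • halfCubeVec fun i => N i j) i.succ = c ⬝ᵥ signVec (N i) := by
  simp [Finset.sum_apply, dotProduct, signVec]

lemma IsRigid.linearIndependent {N : Fin n → κ → Fin 2} (hN : IsRigid N) :
    LinearIndependent ℝ fun j => halfCubeVec fun i => N i j := by
  rw [Fintype.linearIndependent_iff]
  refine fun c hc => congrFun (hN.eq_zero ?_ fun i => ?_)
  · rw [← sum_smul_halfCubeVec_zero N, hc, Pi.zero_apply]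
  · rw [← sum_smul_halfCubeVec_succ N, hc, Pi.zero_apply]

lemma IsRigid.exists_eq_column_of_mem_span {N : Fin n → κ → Fin 2} (hN : IsRigid N)
    {x : Fin n → Fin 2}
    (hx : halfCubeVec x ∈ Submodule.span ℝ (Set.range fun j => halfCubeVec fun i => N i j)) :
    ∃ j, (fun i => N i j) = x := by
  classical
  obtain ⟨c, hc⟩ := (Submodule.mem_span_range_iff_exists_fun ℝ).1 hx
  obtain ⟨j, rfl⟩ := hN.exists_eq_single (c := c)
    (by rw [← sum_smul_halfCubeVec_zero N, hc, halfCubeVec_zero])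
    fun i => by rw [← sum_smul_halfCubeVec_succ N, hc, halfCubeVec_succ, abs_bitSign]
  exact ⟨j, halfCubeVec_injective <| by simpa [Pi.single_apply] using hc⟩

lemma IsRigid.stronglyShatters {N : Fin n → κ → Fin 2} (hN : IsRigid N) :
    StronglyShatters (halfCubeTraces n) (univ.image fun j i => N i j) := by
  refine stronglyShatters_of_linearIndepOn (fun f => posSet_mem_halfCubeTraces) ?_ ?_
  · rw [coe_image, coe_univ, Set.image_univ]
    have hinj : Function.Injective fun j i => N i j :=
      Function.Injective.of_comp (f := halfCubeVec) hN.linearIndependent.injective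
    exact (linearIndepOn_range_iff hinj halfCubeVec).2 hN.linearIndependent
  · intro x hx hspan
    rw [coe_image, coe_univ, Set.image_univ, ← Set.range_comp] at hspan
    obtain ⟨j, hj⟩ := hN.exists_eq_column_of_mem_span hspan
    exact hx (mem_image.2 ⟨j, mem_univ j, hj⟩)

lemma card_filter_image_columns_eq_le [Fintype ι] [DecidableEq ι] [DecidableEq κ]
    (S : Finset (ι → Fin 2)) :
    #{N : ι → κ → Fin 2 | (univ.image fun j i => N i j) = S} ≤
      Fintype.card κ ^ Fintype.card κ := by
  by_cases hS : ∃ N : ι → κ → Fin 2, (univ.image fun j i => N i j) = S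
  swap
  · simp [filter_eq_empty_iff.2 fun N _ hN => hS ⟨N, hN⟩]
  have hcard : #S ≤ Fintype.card κ := by
    obtain ⟨N, rfl⟩ := hS
    exact card_image_le
  calc #{N : ι → κ → Fin 2 | (univ.image fun j i => N i j) = S}
      ≤ #(Fintype.piFinset fun _ : κ => S) := by
        refine card_le_card_of_injOn (fun N j i => N i j) (fun N hN => ?_)
          (fun N _ N' _ h => funext fun i => funext fun j => congrFun (congrFun h j) i)
        have hS : (univ.image fun j i => N i j) = S := by simpa using hN
        exact mem_coe.2 <| Fintype.mem_piFinset.2 fun j => hS ▸ mem_image_of_mem _ (mem_univ j)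
    _ = #S ^ Fintype.card κ := by simp
    _ ≤ Fintype.card κ ^ Fintype.card κ := Nat.pow_le_pow_left hcard _

lemma card_isRigid_le [DecidableEq κ] [DecidablePred (IsRigid (ι := Fin n) (κ := κ))] :
    #{N : Fin n → κ → Fin 2 | IsRigid N} ≤
      Fintype.card κ ^ Fintype.card κ * #(extremalSupports (n + 1)) := by
  set columnSets := ({N | IsRigid N} : Finset (Fin n → κ → Fin 2)).image
    fun N => univ.image fun j i => N i j
  calc #{N : Fin n → κ → Fin 2 | IsRigid N}
      ≤ Fintype.card κ ^ Fintype.card κ * #columnSets :=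
        card_le_mul_card_image _ _ fun S _ =>
          (card_le_card (filter_subset_filter _ (subset_univ _))).trans
            (card_filter_image_columns_eq_le S)
    _ ≤ Fintype.card κ ^ Fintype.card κ * #(halfCubeTraces n) := by
        refine Nat.mul_le_mul_left _ (card_le_card_of_stronglyShatters fun S hS => ?_)
        obtain ⟨N, hN, rfl⟩ := mem_image.1 hS
        exact IsRigid.stronglyShatters ((mem_filter_univ N).1 hN)
    _ ≤ Fintype.card κ ^ Fintype.card κ * #(extremalSupports (n + 1)) :=
        Nat.mul_le_mul_left _ card_image_le

end RigidMatrices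

section LittlewoodOfford

open Matrix

variable {κ : Type*} [Fintype κ]

lemma dotProduct_eq_restrict_dotProduct_restrict {c : κ → ℝ} {T : Finset κ}
    (hc : Function.support c ⊆ T) (x : κ → ℝ) : c ⬝ᵥ x = T.restrict c ⬝ᵥ T.restrict x := by
  have hzero (j) (hj : j ∉ T) : c j * x j = 0 := by
    rw [Function.notMem_support.1 (mt (@hc j) hj), zero_mul]
  rw [dotProduct, ← sum_subset (subset_univ T) fun j _ => hzero j]
  exact (sum_coe_sort T fun j => c j * x j).symm

lemma eq_of_dotProduct_signVec_eq {c : κ → ℝ} (hc : ∀ j, c j ≠ 0) {r r' : κ → Fin 2}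
    (h : c ⬝ᵥ signVec r = c ⬝ᵥ signVec r')
    (hpos : ∀ j, 0 < c j * bitSign (r j) → 0 < c j * bitSign (r' j)) : r = r' := by
  have habs (b j) : |c j * bitSign b| = |c j| := by rw [abs_mul, abs_bitSign, mul_one]
  have hle (j) : c j * bitSign (r j) ≤ c j * bitSign (r' j) := by
    by_cases hj : 0 < c j * bitSign (r j)
    · rw [← abs_of_pos hj, ← abs_of_pos (hpos j hj), habs, habs]
    · rw [← neg_neg (c j * bitSign (r j)), ← abs_of_nonpos (not_lt.1 hj), habs, ← habs (r' j)]
      exact neg_abs_le _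
  have heq := (sum_eq_sum_iff_of_le fun j _ => hle j).1 h
  exact funext fun j => bitSign_injective <| mul_left_cancel₀ (hc j) <| heq j (mem_univ j)

variable [DecidableEq κ]

-- The signs with `c ⬝ᵥ r = v` are determined by the sets `{j | 0 < c j * r j}`, which form an
-- antichain because `c ⬝ᵥ r` is strictly increasing in that set.
lemma card_dotProduct_signVec_eq_le_of_forall_ne_zero {c : κ → ℝ} (hc : ∀ j, c j ≠ 0) (v : ℝ) :
    #{r : κ → Fin 2 | c ⬝ᵥ signVec r = v} ≤
      (Fintype.card κ).choose (Fintype.card κ / 2) := by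
  set level : Finset (κ → Fin 2) := {r | c ⬝ᵥ signVec r = v}
  set posCoords : (κ → Fin 2) → Finset κ := fun r => {j | 0 < c j * bitSign (r j)}
  have heq {r r'} (hr : r ∈ level) (hr' : r' ∈ level) (h : posCoords r ⊆ posCoords r') : r = r' :=
    eq_of_dotProduct_signVec_eq hc
      (((mem_filter_univ r).1 hr).trans ((mem_filter_univ r').1 hr').symm)
      fun j hj => by simpa [posCoords] using h ((mem_filter_univ j).2 hj)
  rw [← card_image_of_injOn fun r hr r' hr' h => heq hr hr' h.subset]
  refine IsAntichain.sperner ?_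
  rw [coe_image]
  rintro _ ⟨r, hr, rfl⟩ _ ⟨r', hr', rfl⟩ hne hsub
  exact hne (congrArg posCoords (heq hr hr' hsub))

lemma card_dotProduct_signVec_eq_le {c : κ → ℝ} {T : Finset κ} (hT : Function.support c = T)
    (v : ℝ) :
    #{r : κ → Fin 2 | c ⬝ᵥ signVec r = v} ≤
      (#T).choose (#T / 2) * 2 ^ (Fintype.card κ - #T) := by
  have hne (j : T) : T.restrict c j ≠ 0 := hT.superset j.2
  have hrestrict (r : κ → Fin 2) : c ⬝ᵥ signVec r = T.restrict c ⬝ᵥ signVec (T.restrict r) :=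
    dotProduct_eq_restrict_dotProduct_restrict hT.subset (signVec r)
  calc #{r : κ → Fin 2 | c ⬝ᵥ signVec r = v}
      ≤ #(({r | T.restrict c ⬝ᵥ signVec r = v} : Finset (T → Fin 2)) ×ˢ
          (univ : Finset ({j // j ∉ T} → Fin 2))) := by
        refine card_le_card_of_injOn (Equiv.piEquivPiSubtypeProd (· ∈ T) fun _ => Fin 2)
          (fun r hr => ?_) (Equiv.injective _).injOn
        have hr' : c ⬝ᵥ signVec r = v := by simpa using hr
        exact mem_coe.2 <| mem_product.2
          ⟨(mem_filter_univ _).2 ((hrestrict r).symm.trans hr'), mem_univ _⟩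
    _ ≤ (#T).choose (#T / 2) * 2 ^ (Fintype.card κ - #T) := by
        rw [card_product, card_univ]
        gcongr
        · simpa using card_dotProduct_signVec_eq_le_of_forall_ne_zero hne v
        · simp [Fintype.card_subtype_compl]

-- A row with `c ⬝ᵥ r = ±1` extends by one coordinate with coefficient `1` to a zero of the form.
lemma card_abs_dotProduct_signVec_eq_one_le {c : κ → ℝ} {T : Finset κ}
    (hT : Function.support c = T) :
    #{r : κ → Fin 2 | |c ⬝ᵥ signVec r| = 1} ≤
      (#T + 1).choose ((#T + 1) / 2) * 2 ^ (Fintype.card κ - #T) := by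
  set c' : Option κ → ℝ := fun o => o.elim 1 c
  have hT' : Function.support c' = insertNone T := by
    ext o
    cases o <;> simp [c', ← mem_coe (s := T), ← hT]
  calc #{r : κ → Fin 2 | |c ⬝ᵥ signVec r| = 1}
      ≤ #{r' : Option κ → Fin 2 | c' ⬝ᵥ signVec r' = 0} := by
        refine card_le_card_of_surjOn (fun r' => r' ∘ some) fun r hr => ?_
        obtain ⟨b, hb⟩ := exists_bitSign_eq (x := -(c ⬝ᵥ signVec r)) (by simpa using hr)
        have hzero : bitSign b + c ⬝ᵥ signVec r = 0 := by rw [hb, neg_add_cancel]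
        exact ⟨fun o => o.elim b r, by simpa [c', dotProduct, signVec] using hzero, rfl⟩
    _ ≤ (#T + 1).choose ((#T + 1) / 2) * 2 ^ (Fintype.card κ - #T) := by
        simpa [card_insertNone] using card_dotProduct_signVec_eq_le hT' 0

end LittlewoodOfford

section NonRigidMatrices

open Matrix

lemma exists_finset_card_eq_forall_mem_span {ι V : Type*} [Fintype ι] [AddCommGroup V]
    [Module ℝ V] [FiniteDimensional ℝ V] (v : ι → V) {m : ℕ} (hV : Module.finrank ℝ V ≤ m)
    (hm : m ≤ Fintype.card ι) :
    ∃ R : Finset ι, #R = m ∧ ∀ i, v i ∈ Submodule.span ℝ (v '' R) := by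
  classical
  obtain ⟨B, -, -, hB_span, hB⟩ :=
    exists_linearIndepOn_extension (linearIndepOn_empty ℝ v) (Set.empty_subset Set.univ)
  have hB_card : #B.toFinset ≤ m := by
    rw [Set.toFinset_card]
    exact hB.linearIndependent.fintype_card_le_finrank.trans hV
  obtain ⟨R, hBR, hR⟩ := exists_superset_card_eq hB_card hm
  refine ⟨R, hR, fun i => Submodule.span_mono (Set.image_mono ?_)
    (hB_span (Set.mem_image_of_mem v (Set.mem_univ i)))⟩
  simpa using hBR

variable {ι κ : Type*} [Fintype κ]

lemma dotProduct_eq_of_restrict_mem_span {T : Finset κ} {c e x : κ → ℝ} {R : Set ι}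
    {u : ι → κ → ℝ} (hc : Function.support c ⊆ T) (he : Function.support e ⊆ T)
    (hR : ∀ i ∈ R, e ⬝ᵥ u i = c ⬝ᵥ u i)
    (hx : T.restrict x ∈ Submodule.span ℝ ((fun i => T.restrict (u i)) '' R)) :
    e ⬝ᵥ x = c ⬝ᵥ x := by
  simp only [dotProduct_eq_restrict_dotProduct_restrict hc,
    dotProduct_eq_restrict_dotProduct_restrict he] at hR ⊢
  refine LinearMap.eqOn_span (f := dotProductBilin ℝ ℝ (T.restrict e))
    (g := dotProductBilin ℝ ℝ (T.restrict c)) ?_ hx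
  rintro _ ⟨i, hi, rfl⟩
  exact hR i hi

/-- The coefficient vectors `c` with support `T` for which the combination of the columns of `N`
has the prescribed signs `y` in the rows `R`. -/
def signSolutions (T : Finset κ) (R : Finset ι) (y : R → Fin 2) (N : ι → κ → Fin 2) :
    Set (κ → ℝ) :=
  {c | Function.support c = T ∧ ∀ i : R, c ⬝ᵥ signVec (N i) = bitSign (y i)}

/-- The constraints `y` on the rows `R` of `N` have a solution with support `T`, and every solution
takes sign values in all rows of `N`. -/
def IsForced (T : Finset κ) (R : Finset ι) (y : R → Fin 2) (N : ι → κ → Fin 2) : Prop :=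
  (signSolutions T R y N).Nonempty ∧
    ∀ c ∈ signSolutions T R y N, ∀ i, |c ⬝ᵥ signVec (N i)| = 1

lemma signSolutions_congr {T : Finset κ} {R : Finset ι} {N N' : ι → κ → Fin 2}
    (h : R.restrict N = R.restrict N') (y : R → Fin 2) :
    signSolutions T R y N = signSolutions T R y N' := by
  have hrow (i : R) : N i = N' i := congrFun h i
  simp only [signSolutions, hrow]

variable [Fintype ι]

lemma exists_isForced_of_not_isRigid (hcard : Fintype.card κ ≤ Fintype.card ι)
    {N : ι → κ → Fin 2} (hN : ¬ IsRigid N) :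
    ∃ T : Finset κ, 2 ≤ #T ∧ ∃ R : Finset ι, #R = #T ∧ ∃ y, IsForced T R y N := by
  classical
  simp only [IsRigid, not_forall] at hN
  obtain ⟨c, hc, hsupport⟩ := hN
  set T : Finset κ := (Function.support c).toFinset
  have hT : Function.support c = T := (Set.coe_toFinset _).symm
  have hT_card : 1 < #T := by
    rwa [one_lt_card_iff_nontrivial, Finset.Nontrivial, ← hT, ← Set.not_subsingleton_iff]
  obtain ⟨R, hR, hspan⟩ := exists_finset_card_eq_forall_mem_span
    (fun i => T.restrict (signVec (N i))) (m := #T) (by simp) ((card_le_univ T).trans hcard)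
  choose y hy using fun i => exists_bitSign_eq (hc i)
  refine ⟨T, hT_card, R, hR, R.restrict y, ⟨c, hT, fun i => (hy i).symm⟩, fun e he i => ?_⟩
  rw [dotProduct_eq_of_restrict_mem_span hT.subset he.1.subset
    (fun l hl => (he.2 ⟨l, hl⟩).trans (hy l)) (hspan i)]
  exact hc i

variable [DecidableEq ι] [DecidableEq κ]

lemma card_isForced_restrict_eq_le {T : Finset κ} {R : Finset ι} {y : R → Fin 2}
    [DecidablePred (IsForced T R y)] {N₀ : ι → κ → Fin 2} {c : κ → ℝ}
    (hc : c ∈ signSolutions T R y N₀) :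
    #{N | IsForced T R y N ∧ R.restrict N = R.restrict N₀} ≤
      ((#T + 1).choose ((#T + 1) / 2) * 2 ^ (Fintype.card κ - #T)) ^ (Fintype.card ι - #R) := by
  set signRows : Finset (κ → Fin 2) := {r | |c ⬝ᵥ signVec r| = 1}
  calc #{N | IsForced T R y N ∧ R.restrict N = R.restrict N₀}
      ≤ #(Fintype.piFinset fun _ : {i // i ∉ R} => signRows) := by
        refine card_le_card_of_injOn (fun N i => N i) (fun N hN => ?_) fun N hN N' hN' h => ?_
        · obtain ⟨hforced, hrestrict⟩ := (mem_filter_univ N).1 hN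
          refine mem_coe.2 <| Fintype.mem_piFinset.2 fun i => (mem_filter_univ _).2 ?_
          exact hforced.2 c (signSolutions_congr hrestrict y ▸ hc) i
        · have hrestrict : R.restrict N = R.restrict N' :=
            ((mem_filter_univ N).1 hN).2.trans ((mem_filter_univ N').1 hN').2.symm
          ext1 i
          by_cases hi : i ∈ R
          · exact congrFun hrestrict ⟨i, hi⟩
          · exact congrFun h ⟨i, hi⟩
    _ = #signRows ^ (Fintype.card ι - #R) := by
        simp [Fintype.card_subtype_compl]
    _ ≤ _ := Nat.pow_le_pow_left (card_abs_dotProduct_signVec_eq_one_le hc.1) _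

-- The rows in `R` determine a solution `c`, and the Littlewood–Offord bound for `c` applies to each
-- of the remaining rows.
lemma card_isForced_le (T : Finset κ) (R : Finset ι) (y : R → Fin 2)
    [DecidablePred (IsForced T R y)] :
    #{N | IsForced T R y N} ≤
      ((#T + 1).choose ((#T + 1) / 2) * 2 ^ (Fintype.card κ - #T)) ^ (Fintype.card ι - #R) *
        (2 ^ Fintype.card κ) ^ #R := by
  refine (card_le_mul_card_image (f := R.restrict) _ _ fun g hg => ?_).trans
    (Nat.mul_le_mul_left _ <| (card_le_univ _).trans_eq (by simp))
  obtain ⟨N₀, hN₀, rfl⟩ := mem_image.1 hg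
  obtain ⟨c, hc⟩ := ((mem_filter_univ N₀).1 hN₀).1
  rw [filter_filter]
  exact card_isForced_restrict_eq_le hc

lemma card_not_isRigid_le [DecidablePred (IsRigid (ι := ι) (κ := κ))]
    (hcard : Fintype.card κ ≤ Fintype.card ι) :
    #{N : ι → κ → Fin 2 | ¬ IsRigid N} ≤
      ∑ s ∈ Icc 2 (Fintype.card κ), (Fintype.card κ).choose s * ((Fintype.card ι).choose s *
        (2 ^ s * (((s + 1).choose ((s + 1) / 2) * 2 ^ (Fintype.card κ - s)) ^
          (Fintype.card ι - s) * (2 ^ Fintype.card κ) ^ s))) := by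
  classical
  have hsubset : ({N : ι → κ → Fin 2 | ¬ IsRigid N} : Finset _) ⊆
      (Icc 2 (Fintype.card κ)).biUnion fun s => (powersetCard s univ).biUnion fun T =>
        (powersetCard s univ).biUnion fun R => univ.biUnion fun y : R → Fin 2 =>
          ({N | IsForced T R y N} : Finset _) := fun N hN => by
    obtain ⟨T, hT, R, hR, y, hy⟩ := exists_isForced_of_not_isRigid hcard ((mem_filter_univ N).1 hN)
    simp only [mem_biUnion, mem_Icc, mem_powersetCard_univ, mem_univ, true_and, mem_filter_univ]
    exact ⟨#T, ⟨hT, card_le_univ T⟩, T, rfl, R, hR, y, hy⟩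
  refine (card_le_card hsubset).trans <| card_biUnion_le.trans <| sum_le_sum fun s _ => ?_
  rw [← card_univ (α := κ), ← card_univ (α := ι), ← card_powersetCard s, ← card_powersetCard s]
  refine card_biUnion_le_card_mul _ _ _ fun T hT => card_biUnion_le_card_mul _ _ _ fun R hR => ?_
  obtain rfl := mem_powersetCard_univ.1 hT
  have hy : #(univ : Finset (R → Fin 2)) = 2 ^ #T := by
    simp [mem_powersetCard_univ.1 hR]
  rw [← hy]
  refine card_biUnion_le_card_mul _ _ _ fun y _ => ?_
  simpa [mem_powersetCard_univ.1 hR] using card_isForced_le T R y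

end NonRigidMatrices

section CentralBinomial

lemma centralBinom_sq_mul_le (m : ℕ) : m.centralBinom ^ 2 * (2 * m + 1) ≤ 16 ^ m := by
  induction m with
  | zero => simp
  | succ m ih =>
    refine Nat.le_of_mul_le_mul_left ?_ (pow_pos m.succ_pos 2)
    calc (m + 1) ^ 2 * ((m + 1).centralBinom ^ 2 * (2 * (m + 1) + 1))
        = ((m + 1) * (m + 1).centralBinom) ^ 2 * (2 * m + 3) := by ring
      _ = m.centralBinom ^ 2 * (2 * m + 1) * (4 * ((2 * m + 1) * (2 * m + 3))) := by
          rw [Nat.succ_mul_centralBinom_succ]; ring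
      _ ≤ 16 ^ m * (4 * (4 * (m + 1) ^ 2)) := by
          gcongr ?_ * (4 * ?_)
          linarith
      _ = (m + 1) ^ 2 * 16 ^ (m + 1) := by ring

lemma choose_half_sq_mul_le (n : ℕ) : n.choose (n / 2) ^ 2 * (n + 1) ≤ 4 ^ n := by
  obtain ⟨m, rfl | rfl⟩ := Nat.even_or_odd' n
  · rw [Nat.mul_div_cancel_left m two_pos, pow_mul]
    exact centralBinom_sq_mul_le m
  · have hcentral : (m + 1).centralBinom = 2 * (2 * m + 1).choose m := by
      rw [Nat.centralBinom_eq_two_mul_choose, Nat.mul_succ, Nat.choose_succ_succ,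
        Nat.choose_symm_half, ← two_mul]
    have hsq := centralBinom_sq_mul_le (m + 1)
    have hpow : 16 ^ (m + 1) = 4 * 4 ^ (2 * m + 1) := by
      rw [pow_succ 4, pow_mul]; norm_num; ring
    rw [hcentral, hpow] at hsq
    rw [show (2 * m + 1) / 2 = m by lia]
    nlinarith

/-- The Littlewood–Offord bound `C(s + 1, ⌊(s + 1) / 2⌋) / 2 ^ s` for the probability that
`|∑ c_j ε_j| = 1`, where the `ε_j` are random signs and `c` has exactly `s` nonzero coefficients. -/
noncomputable def atomProb (s : ℕ) : ℝ := (s + 1).choose ((s + 1) / 2) / 2 ^ s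

lemma atomProb_nonneg (s : ℕ) : 0 ≤ atomProb s := by
  unfold atomProb; positivity

lemma antitone_atomProb : Antitone atomProb := by
  refine antitone_nat_of_succ_le fun s => ?_
  have hchoose : (s + 2).choose ((s + 2) / 2) ≤ 2 * (s + 1).choose ((s + 1) / 2) := by
    rw [show (s + 2) / 2 = s / 2 + 1 by lia, Nat.choose_succ_succ, two_mul]
    exact add_le_add (Nat.choose_le_middle _ _) (Nat.choose_le_middle _ _)
  rw [atomProb, atomProb, div_le_div_iff₀ (by positivity) (by positivity), pow_succ', ← mul_assoc]
  gcongr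
  rw [mul_comm]
  exact_mod_cast hchoose

lemma atomProb_le_three_quarters {s : ℕ} (hs : 2 ≤ s) : atomProb s ≤ 3 / 4 :=
  (antitone_atomProb hs).trans_eq (by norm_num [atomProb, Nat.choose])

lemma atomProb_le_sqrt (s : ℕ) : atomProb s ≤ √(4 / (s + 2)) := by
  refine Real.le_sqrt_of_sq_le ?_
  have hsq : (((s + 1).choose ((s + 1) / 2) : ℝ)) ^ 2 * (s + 2) ≤ 4 * 4 ^ s := by
    rw [← pow_succ']
    exact_mod_cast choose_half_sq_mul_le (s + 1)
  rwa [atomProb, div_pow, div_le_div_iff₀ (by positivity) (by positivity), pow_right_comm,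
    show (2 : ℝ) ^ 2 = 4 by norm_num]

lemma tendsto_atomProb : Filter.Tendsto atomProb Filter.atTop (nhds 0) := by
  refine squeeze_zero atomProb_nonneg atomProb_le_sqrt ?_
  have hdiv : Filter.Tendsto (fun s : ℕ => 4 / ((s : ℝ) + 2)) Filter.atTop (nhds 0) :=
    (Filter.tendsto_atTop_add_const_right _ 2 tendsto_natCast_atTop_atTop).const_div_atTop 4
  simpa using hdiv.sqrt

end CentralBinomial

section NonRigidProportion

/-- The union bound for the proportion of `n × k` sign matrices that are not rigid: `s` is the
number of nonzero coefficients of a bad solution, and `2 ^ s` counts the possible right-hand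
sides. -/
noncomputable def nonRigidBound (n k : ℕ) : ℝ :=
  ∑ s ∈ Icc 2 k, (k.choose s * n.choose s * 2 ^ s : ℕ) * atomProb s ^ (n - s)

lemma card_not_isRigid_le_nonRigidBound_mul {n k : ℕ} (hkn : k ≤ n)
    [DecidablePred (IsRigid (ι := Fin n) (κ := Fin k))] :
    (#{N : Fin n → Fin k → Fin 2 | ¬ IsRigid N} : ℝ) ≤ nonRigidBound n k * 2 ^ (k * n) := by
  have hcard := card_not_isRigid_le (ι := Fin n) (κ := Fin k) (by simpa using hkn)
  simp only [Fintype.card_fin] at hcard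
  refine (Nat.cast_le.2 hcard).trans_eq ?_
  push_cast [nonRigidBound]
  rw [sum_mul]
  refine sum_congr rfl fun s hs => ?_
  have hsk : s ≤ k := (mem_Icc.1 hs).2
  have hatom : ((s + 1).choose ((s + 1) / 2) * 2 ^ (k - s) : ℝ) = atomProb s * 2 ^ k := by
    rw [atomProb, ← pow_sub_mul_pow 2 hsk]
    field_simp
  have hpow : (2 : ℝ) ^ (k * n) = (2 ^ k) ^ (n - s) * (2 ^ k) ^ s := by
    rw [pow_mul, pow_sub_mul_pow _ (hsk.trans hkn)]
  rw [hatom, hpow, mul_pow]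
  ring

lemma choose_mul_choose_mul_two_pow_le {n k : ℕ} (hkn : k ≤ n) (s : ℕ) :
    k.choose s * n.choose s * 2 ^ s ≤ (2 * n ^ 2) ^ s := by
  calc k.choose s * n.choose s * 2 ^ s ≤ n ^ s * n ^ s * 2 ^ s := by
        gcongr
        · exact (Nat.choose_le_choose s hkn).trans (Nat.choose_le_pow _ _)
        · exact Nat.choose_le_pow _ _
    _ = (2 * n ^ 2) ^ s := by ring

lemma sum_choose_mul_choose_mul_two_pow_le {n k : ℕ} (hkn : k ≤ n) :
    ∑ s ∈ Icc 2 k, k.choose s * n.choose s * 2 ^ s ≤ 8 ^ n := by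
  calc ∑ s ∈ Icc 2 k, k.choose s * n.choose s * 2 ^ s
      ≤ ∑ s ∈ Icc 2 k, k.choose s * 2 ^ n * 2 ^ n := by
        refine sum_le_sum fun s hs => ?_
        have hsn : s ≤ n := (mem_Icc.1 hs).2.trans hkn
        gcongr
        · exact Nat.choose_le_two_pow n s
        · norm_num
    _ ≤ ∑ s ∈ range (k + 1), k.choose s * 2 ^ n * 2 ^ n :=
        sum_le_sum_of_subset fun s hs => mem_range_succ_iff.2 (mem_Icc.1 hs).2
    _ = 2 ^ k * 2 ^ n * 2 ^ n := by rw [← sum_mul, ← sum_mul, Nat.sum_range_choose]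
    _ ≤ 2 ^ n * 2 ^ n * 2 ^ n := by gcongr; norm_num
    _ = 8 ^ n := by rw [← mul_pow, ← mul_pow]; norm_num

-- Small `s` have polynomially many choices but only the bound `3 / 4` on the probability; large `s`
-- have exponentially many choices, beaten by the small probability `q`.
lemma nonRigidBound_le {n k s₀ : ℕ} {q : ℝ} (hkn : k ≤ n) (hq₀ : 0 ≤ q) (hq₁ : q ≤ 1)
    (hq : ∀ s ≥ s₀, atomProb s ≤ q) :
    nonRigidBound n k ≤ n * ((2 * n ^ 2) ^ s₀ * (3 / 4) ^ (n - s₀)) + 8 ^ n * q ^ (n - k) := by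
  have hterm : ∀ s ∈ Icc 2 k, (k.choose s * n.choose s * 2 ^ s : ℕ) * atomProb s ^ (n - s) ≤
      (2 * (n : ℝ) ^ 2) ^ s₀ * (3 / 4) ^ (n - s₀) +
        (k.choose s * n.choose s * 2 ^ s : ℕ) * q ^ (n - k) := fun s hs => by
    obtain ⟨hs2, hsk⟩ := mem_Icc.1 hs
    obtain hs₀ | hs₀ := lt_or_ge s s₀
    · refine le_add_of_le_of_nonneg ?_ (by positivity)
      have hn : 1 ≤ 2 * n ^ 2 := Nat.mul_pos two_pos (pow_pos (by lia) 2)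
      refine mul_le_mul ?_ ?_ (pow_nonneg (atomProb_nonneg s) _) (by positivity)
      · exact_mod_cast (choose_mul_choose_mul_two_pow_le hkn s).trans
          (Nat.pow_le_pow_right hn hs₀.le)
      · calc atomProb s ^ (n - s) ≤ (3 / 4) ^ (n - s) :=
              pow_le_pow_left₀ (atomProb_nonneg s) (atomProb_le_three_quarters hs2) _
          _ ≤ (3 / 4) ^ (n - s₀) :=
              pow_le_pow_of_le_one (by norm_num) (by norm_num) (by lia)
    · refine le_add_of_nonneg_of_le (by positivity) ?_
      gcongr ?_ * ?_
      calc atomProb s ^ (n - s) ≤ q ^ (n - s) := pow_le_pow_left₀ (atomProb_nonneg s) (hq s hs₀) _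
        _ ≤ q ^ (n - k) := pow_le_pow_of_le_one hq₀ hq₁ (by lia)
  refine (sum_le_sum hterm).trans ?_
  rw [sum_add_distrib, sum_const, ← sum_mul, nsmul_eq_mul, ← Nat.cast_sum]
  gcongr
  · simp only [Nat.card_Icc]; lia
  · exact_mod_cast sum_choose_mul_choose_mul_two_pow_le hkn

lemma tendsto_mul_pow_mul_three_quarters_pow (s₀ : ℕ) :
    Filter.Tendsto (fun n : ℕ => (n : ℝ) * ((2 * n ^ 2) ^ s₀ * (3 / 4) ^ (n - s₀)))
      Filter.atTop (nhds 0) := by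
  have hdecay : Filter.Tendsto (fun n : ℕ => (n : ℝ) ^ (2 * s₀ + 1) * (3 / 4) ^ n)
      Filter.atTop (nhds 0) :=
    tendsto_pow_const_mul_const_pow_of_abs_lt_one _ (by norm_num [abs_of_pos])
  have hscaled := hdecay.const_mul ((8 / 3) ^ s₀)
  rw [mul_zero] at hscaled
  refine hscaled.congr' ?_
  filter_upwards [Filter.eventually_ge_atTop s₀] with n hn
  have hcancel : (8 / 3 : ℝ) ^ s₀ * (3 / 4) ^ s₀ = 2 ^ s₀ := by rw [← mul_pow]; norm_num
  rw [← pow_sub_mul_pow (3 / 4 : ℝ) hn, mul_pow 2, ← hcancel]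
  ring

lemma eight_pow_mul_pow_div_le {L n : ℕ} (hL : 0 < L) (hLn : L ≤ n) :
    (8 : ℝ) ^ n * ((1 / 16) ^ (2 * L)) ^ (n / L) ≤ (1 / 2) ^ n := by
  have hexp : n ≤ 2 * L * (n / L) := by
    have hmod := Nat.div_add_mod n L
    have hlt := Nat.mod_lt n hL
    have hle : L * 1 ≤ L * (n / L) := Nat.mul_le_mul_left L (Nat.div_pos hLn hL)
    lia
  calc (8 : ℝ) ^ n * ((1 / 16) ^ (2 * L)) ^ (n / L) ≤ 8 ^ n * (1 / 16) ^ n := by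
        rw [← pow_mul]
        exact mul_le_mul_of_nonneg_left
          (pow_le_pow_of_le_one (by norm_num) (by norm_num) hexp) (by positivity)
    _ = (1 / 2) ^ n := by rw [← mul_pow]; norm_num

lemma tendsto_nonRigidBound {L : ℕ} (hL : 0 < L) :
    Filter.Tendsto (fun n => nonRigidBound n (n - n / L)) Filter.atTop (nhds 0) := by
  obtain ⟨s₀, hs₀⟩ := Filter.eventually_atTop.1 <|
    tendsto_atomProb.eventually_le_const (show (0 : ℝ) < (1 / 16) ^ (2 * L) by positivity)
  have hupper := (tendsto_mul_pow_mul_three_quarters_pow s₀).add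
    (tendsto_pow_atTop_nhds_zero_of_lt_one (r := (1 / 2 : ℝ)) (by norm_num) (by norm_num))
  rw [add_zero] at hupper
  refine squeeze_zero' (.of_forall fun n => ?_) ?_ hupper
  · exact sum_nonneg fun s _ => mul_nonneg (Nat.cast_nonneg _) (pow_nonneg (atomProb_nonneg s) _)
  · filter_upwards [Filter.eventually_ge_atTop L] with n hn
    refine (nonRigidBound_le (Nat.sub_le _ _) (by positivity)
      (pow_le_one₀ (by norm_num) (by norm_num)) hs₀).trans ?_
    rw [Nat.sub_sub_self (Nat.div_le_self _ _)]
    gcongr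
    exact eight_pow_mul_pow_div_le hL hn

end NonRigidProportion

section Asymptotics

lemma eventually_two_pow_le_two_mul_card_isRigid {L : ℕ} (hL : 0 < L)
    [∀ n k : ℕ, DecidablePred (IsRigid (ι := Fin n) (κ := Fin k))] :
    ∀ᶠ n : ℕ in Filter.atTop,
      2 ^ ((n - n / L) * n) ≤ 2 * #{N : Fin n → Fin (n - n / L) → Fin 2 | IsRigid N} := by
  filter_upwards [(tendsto_nonRigidBound hL).eventually_le_const (one_half_pos (α := ℝ))]
    with n hbound
  set k := n - n / L
  have hnot : (#{N : Fin n → Fin k → Fin 2 | ¬ IsRigid N} : ℝ) ≤ 1 / 2 * 2 ^ (k * n) :=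
    (card_not_isRigid_le_nonRigidBound_mul (Nat.sub_le _ _)).trans (by gcongr)
  have htotal : (#{N : Fin n → Fin k → Fin 2 | IsRigid N} : ℝ) +
      #{N : Fin n → Fin k → Fin 2 | ¬ IsRigid N} = 2 ^ (k * n) := by
    rw [← Nat.cast_add, card_filter_add_card_filter_not]
    simp [pow_mul]
  have hrigid : (2 : ℝ) ^ (k * n) ≤ 2 * #{N : Fin n → Fin k → Fin 2 | IsRigid N} := by linarith
  exact_mod_cast hrigid

lemma eventually_two_pow_le_mul_M {L : ℕ} (hL : 0 < L) : ∀ᶠ n : ℕ in Filter.atTop,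
    2 ^ ((n - n / L) * n) ≤
      2 * ((n + 1) ^ (n + 1) * ((n + 1) ^ (n + 1) * 2 ^ (n + 1))) * M (n + 1) := by
  classical
  filter_upwards [eventually_two_pow_le_two_mul_card_isRigid hL] with n hn
  set k := n - n / L
  have hk : k ≤ n + 1 := (Nat.sub_le _ _).trans n.le_succ
  have hrigid := card_isRigid_le (n := n) (κ := Fin k)
  rw [Fintype.card_fin] at hrigid
  calc 2 ^ (k * n) ≤ 2 * #{N : Fin n → Fin k → Fin 2 | IsRigid N} := hn
    _ ≤ 2 * (k ^ k * ((n + 1).factorial * 2 ^ (n + 1) * M (n + 1))) := by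
        grw [hrigid, card_extremalSupports_le_mul_M]
    _ ≤ 2 * ((n + 1) ^ (n + 1) * ((n + 1) ^ (n + 1) * 2 ^ (n + 1) * M (n + 1))) := by
        gcongr 2 * (?_ * (?_ * _ * _))
        · exact (Nat.pow_le_pow_left hk k).trans (Nat.pow_le_pow_right n.succ_pos hk)
        · exact Nat.factorial_le_pow _
    _ = 2 * ((n + 1) ^ (n + 1) * ((n + 1) ^ (n + 1) * 2 ^ (n + 1))) * M (n + 1) := by ring

lemma le_logb_M_of_two_pow_le_mul {m d : ℕ} (hd : 0 < d)
    (hM : 2 ^ m ≤ 2 * (d ^ d * (d ^ d * 2 ^ d)) * M d) :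
    m - 1 - d - 2 * (d * Real.logb 2 d) ≤ Real.logb 2 (M d) := by
  have hpos : 0 < M d := Nat.pos_of_ne_zero fun hzero => by simp [hzero] at hM
  have hlog : Real.logb 2 (2 ^ m) ≤
      Real.logb 2 (2 * ((d : ℝ) ^ d * ((d : ℝ) ^ d * 2 ^ d)) * M d) :=
    Real.logb_le_logb_of_le one_lt_two (by positivity) (by exact_mod_cast hM)
  rw [Real.logb_mul (by positivity) (by positivity), Real.logb_mul (by positivity) (by positivity),
    Real.logb_mul (by positivity) (by positivity), Real.logb_mul (by positivity) (by positivity),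
    Real.logb_pow, Real.logb_pow, Real.logb_pow, Real.logb_self_eq_one one_lt_two] at hlog
  linarith

lemma eventually_le_logb_M_div_sq {L : ℕ} (hL : 0 < L) : ∀ᶠ d : ℕ in Filter.atTop,
    (1 - 1 / (L : ℝ)) * (1 - 1 / (d : ℝ)) ^ 2 - (1 / (d : ℝ)) ^ 2 - 1 / (d : ℝ)
      - 2 * (Real.logb 2 d / d) ≤ Real.logb 2 (M d) / (d : ℝ) ^ 2 := by
  rw [← Filter.map_add_atTop_eq_nat 1, Filter.eventually_map]
  filter_upwards [eventually_two_pow_le_mul_M hL] with n hn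
  have hlog := le_logb_M_of_two_pow_le_mul (Nat.add_one_pos n) hn
  have hexp : (1 - 1 / (L : ℝ)) * n ^ 2 ≤ ((n - n / L) * n : ℕ) := by
    push_cast [Nat.cast_sub (Nat.div_le_self n L)]
    calc (1 - 1 / (L : ℝ)) * n ^ 2 = (n - n / L) * n := by ring
      _ ≤ (n - (n / L : ℕ)) * n := by gcongr; exact Nat.cast_div_le
  have hn1 : ((n + 1 : ℕ) : ℝ) - 1 = n := by push_cast; ring
  have hd : (0 : ℝ) < (n + 1 : ℕ) := by positivity
  rw [← hn1] at hexp
  generalize n + 1 = d at *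
  rw [le_div_iff₀ (by positivity)]
  refine le_trans (le_of_eq ?_) ((sub_le_sub_right (sub_le_sub_right (sub_le_sub_right
    hexp 1) d) _).trans hlog)
  field_simp

lemma tendsto_logb_two_div_natCast :
    Filter.Tendsto (fun d : ℕ => Real.logb 2 d / d) Filter.atTop (nhds 0) := by
  have hlog := (Real.isLittleO_log_id_atTop.tendsto_div_nhds_zero.div_const (Real.log 2)).comp
    (tendsto_natCast_atTop_atTop (R := ℝ))
  rw [zero_div] at hlog
  exact hlog.congr fun d => div_right_comm _ _ _

lemma eventually_lt_logb_M_div_sq {a : ℝ} (ha : a < 1) :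
    ∀ᶠ d : ℕ in Filter.atTop, a < Real.logb 2 (M d) / (d : ℝ) ^ 2 := by
  obtain ⟨l, hl⟩ := exists_nat_one_div_lt (sub_pos.2 ha)
  have hinv := tendsto_one_div_atTop_nhds_zero_nat (𝕜 := ℝ)
  have hlower := (((((hinv.const_sub 1).pow 2).const_mul (1 - 1 / ((l + 1 : ℕ) : ℝ))).sub
    (hinv.pow 2)).sub hinv).sub (tendsto_logb_two_div_natCast.const_mul 2)
  have hlt : a < (1 - 1 / ((l + 1 : ℕ) : ℝ)) * (1 - 0) ^ 2 - 0 ^ 2 - 0 - 2 * 0 := by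
    push_cast
    linarith
  filter_upwards [eventually_le_logb_M_div_sq l.succ_pos, hlower.eventually_const_lt hlt]
    with d hle hlt
  exact hlt.trans_le hle

lemma logb_M_div_sq_le {d : ℕ} (hd : 0 < d) :
    Real.logb 2 (M d) / (d : ℝ) ^ 2 ≤ 1 + 1 / (d : ℝ) := by
  have hd' : (0 : ℝ) < d := Nat.cast_pos.2 hd
  rw [div_le_iff₀ (pow_pos hd' 2)]
  refine (logb_M_le d).trans_eq ?_
  field_simp

end Asymptotics

/-- log₂ M(d,2) = d²(1 + o(1)) as d → ∞. -/
theorem stmt_12 :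
    Filter.Tendsto (fun d : ℕ => Real.logb 2 (M d) / (d : ℝ) ^ 2)
      Filter.atTop (nhds 1) := by
  refine tendsto_order.2 ⟨fun a ha => eventually_lt_logb_M_div_sq ha, fun a ha => ?_⟩
  have hupper : Filter.Tendsto (fun d : ℕ => 1 + 1 / (d : ℝ)) Filter.atTop (nhds (1 + 0)) :=
    tendsto_one_div_atTop_nhds_zero_nat.const_add 1
  rw [add_zero] at hupper
  filter_upwards [hupper.eventually_lt_const ha, Filter.eventually_gt_atTop 0] with d hlt hd
  exact (logb_M_div_sq_le hd).trans_lt hlt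
end

section
/- A 2-dimensional (0,1)-matrix A of order n is a threshold matrix if and only if A is equivalent to some stepped matrix. -/
open Finset

/-- A 2-dimensional matrix is stepped if the supports of its rows and of its columns are
nested decreasingly. -/
def Stepped {n : ℕ} (A : (Fin 2 → Fin n) → Bool) : Prop :=
  (∀ i i' j : Fin n, i ≤ i' → A ![i', j] = true → A ![i, j] = true) ∧
  (∀ i j j' : Fin n, j ≤ j' → A ![i, j'] = true → A ![i, j] = true)

/-!
Sorting the weights of each direction decreasingly permutes a threshold matrix into an antitone
one, which in dimension two is the same as a stepped one. Conversely, row `i` of a stepped matrix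
is an initial segment of some length `r i`, so its `(i, j)` entry is `1` iff
`n ≤ r i + (n - 1 - j)`; dividing by `n` displays it as a threshold matrix. Threshold weights are
carried back along an equivalence by relabelling them.
-/

theorem exists_perm_antitone_comp {n : ℕ} {R : Type*} [LinearOrder R] (f : Fin n → R) :
    ∃ σ : Equiv.Perm (Fin n), Antitone (f ∘ σ) :=
  ⟨Tuple.sort (OrderDual.toDual ∘ f), Tuple.monotone_sort (OrderDual.toDual ∘ f)⟩

section AnyDimension

variable {d n : ℕ} {A B : (Fin d → Fin n) → Bool}

theorem antitone_of_antitone_weights {Λ : Fin d → Fin n → ℝ}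
    (hA : ∀ α, A α = true ↔ 1 ≤ ∑ i, Λ i (α i)) (hΛ : ∀ i, Antitone (Λ i)) : Antitone A := by
  intro α β hαβ
  rw [Bool.le_iff_imp, hA, hA]
  intro hβ
  exact hβ.trans (sum_le_sum fun i _ => hΛ i (hαβ i))

theorem IsThreshold.exists_antitone_matEquiv (hA : IsThreshold A) :
    ∃ B : (Fin d → Fin n) → Bool, Antitone B ∧ MatEquiv A B := by
  obtain ⟨Λ, -, hΛ⟩ := hA
  choose σ hσ using fun i => exists_perm_antitone_comp (Λ i)
  exact ⟨fun α => A fun i => σ i (α i), antitone_of_antitone_weights (fun _ => hΛ _) hσ,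
    1, σ, fun _ => rfl⟩

theorem IsThreshold.of_matEquiv (hB : IsThreshold B) (hAB : MatEquiv A B) : IsThreshold A := by
  obtain ⟨Λ, hΛ_nonneg, hΛ⟩ := hB
  obtain ⟨π, σ, hπσ⟩ := hAB
  refine ⟨fun j x => Λ (π.symm j) ((σ (π.symm j)).symm x), fun _ _ => hΛ_nonneg _ _, fun α => ?_⟩
  have apply_eq : A α = B fun i => (σ i).symm (α (π i)) := by simp [hπσ]
  rw [apply_eq, hΛ, ← Equiv.sum_comp π.symm]
  simp only [Equiv.apply_symm_apply]

end AnyDimension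

section TwoDimensional

variable {n : ℕ} {A : (Fin 2 → Fin n) → Bool}

theorem stepped_of_antitone (hA : Antitone A) : Stepped A :=
  ⟨fun _ _ _ hi => Bool.le_iff_imp.1 (hA (by simpa [Pi.le_def, Fin.forall_fin_two] using hi)),
    fun _ _ _ hj => Bool.le_iff_imp.1 (hA (by simpa [Pi.le_def, Fin.forall_fin_two] using hj))⟩

theorem isThreshold_of_row_lengths {r : Fin n → ℕ}
    (hA : ∀ i j : Fin n, A ![i, j] = true ↔ (j : ℕ) < r i) : IsThreshold A := by
  refine ⟨fun i j => (![r, fun j => j.rev] i j : ℝ) / n, fun _ _ => by positivity, fun α => ?_⟩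
  have hn : (0 : ℝ) < n := mod_cast (α 0).pos
  calc
    A α = true ↔ (α 1 : ℕ) < r (α 0) := by rw [← hA, ← FinVec.etaExpand_eq α]; rfl
    _ ↔ n ≤ r (α 0) + (α 1).rev := by rw [Fin.val_rev]; omega
    _ ↔ (1 : ℝ) ≤ (r (α 0) : ℝ) / n + ((α 1).rev : ℕ) / n := by
      rw [← add_div, one_le_div hn]; norm_cast
    _ ↔ _ := by rw [Fin.sum_univ_two]; rfl

theorem Stepped.isThreshold (hA : Stepped A) : IsThreshold A :=
  isThreshold_of_row_lengths (r := fun i => #{j | A ![i, j] = true}) fun i _ =>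
    (Fin.lt_card_filter_univ_iff_apply_of_imp (fun j => A ![i, j] = true)
      fun _ _ => hA.2 i _ _).symm

end TwoDimensional

/-- A 2-dimensional matrix is threshold iff it is equivalent to a stepped matrix. -/
theorem stmt_13 {n : ℕ} (A : (Fin 2 → Fin n) → Bool) :
    IsThreshold A ↔ ∃ B : (Fin 2 → Fin n) → Bool, Stepped B ∧ MatEquiv A B := by
  constructor
  · intro hA
    obtain ⟨B, hB, hAB⟩ := hA.exists_antitone_matEquiv
    exact ⟨B, stepped_of_antitone hB, hAB⟩
  · rintro ⟨B, hB, hAB⟩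
    exact hB.isThreshold.of_matEquiv hAB
end

section
/- For every n ≥ 1, the number of equivalence classes of 2-dimensional threshold (0,1)-matrices of order n is at most the binomial coefficient C(2n, n). -/
open Finset

/-!
After sorting its columns by decreasing weight, every row of a threshold matrix is an initial
segment of ones, whose length is the number of ones in the row. Hence two threshold matrices with
the same multiset of row sizes differ by a permutation of rows and one of columns, and there are
`C(2n, n)` multisets of `n` numbers from `{0, …, n}`. Transposition is never used.
-/

theorem natCard_quot_le_of_eq_imp_rel {α β : Type*} [Finite β] {r : α → α → Prop} (f : α → β)
    (hf : ∀ a b, f a = f b → r a b) : Nat.card (Quot r) ≤ Nat.card β :=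
  Nat.card_le_card_of_injective (fun q : Quot r => f q.out) fun p q hpq => by
    rw [← p.out_eq, ← q.out_eq]
    exact Quot.sound (hf _ _ hpq)

theorem exists_equiv_comp_eq_of_map_univ_eq {ι κ γ : Type*} [Fintype ι] [Fintype κ]
    {f : ι → γ} {g : κ → γ} (h : univ.val.map f = univ.val.map g) : ∃ e : ι ≃ κ, g ∘ e = f := by
  classical
  have card_fiber_eq (c : γ) : Fintype.card {i // f i = c} = Fintype.card {k // g k = c} := by
    simpa only [Multiset.count_map, Fintype.card_subtype, card_def, filter_val,
      eq_comm (a := c)] using congrArg (Multiset.count c) h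
  let e := Equiv.ofFiberEquiv fun c => Fintype.equivOfCardEq (card_fiber_eq c)
  exact ⟨e, funext (Equiv.ofFiberEquiv_map _)⟩

theorem exists_perm_lt_card_superlevel_iff {n : ℕ} {α : Type*} [LinearOrder α] (f : Fin n → α) :
    ∃ τ : Equiv.Perm (Fin n), ∀ a (j : Fin n), j < #{k | a ≤ f k} ↔ a ≤ f (τ j) := by
  let τ := Tuple.sort (OrderDual.toDual ∘ f)
  have antitone_comp : Antitone (f ∘ τ) := Tuple.monotone_sort (OrderDual.toDual ∘ f)
  refine ⟨τ, fun a j => ?_⟩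
  have card_comp : #{k | a ≤ (f ∘ τ) k} = #{k | a ≤ f k} := card_equiv τ (by simp)
  rw [← card_comp]
  exact Tuple.lt_card_ge_iff_apply_ge_of_antitone antitone_comp

theorem exists_perm_superlevel_iff_of_card_eq {n : ℕ} {α β : Type*} [LinearOrder α]
    [LinearOrder β] (f : Fin n → α) (g : Fin n → β) :
    ∃ τ : Equiv.Perm (Fin n), ∀ a b, #{k | a ≤ f k} = #{k | b ≤ g k} →
      ∀ j, a ≤ f (τ j) ↔ b ≤ g j := by
  obtain ⟨σ, hσ⟩ := exists_perm_lt_card_superlevel_iff f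
  obtain ⟨ρ, hρ⟩ := exists_perm_lt_card_superlevel_iff g
  refine ⟨ρ.symm.trans σ, fun a b hab j => ?_⟩
  rw [Equiv.trans_apply, ← hσ, hab, hρ, Equiv.apply_symm_apply]

section TwoDimensional

variable {n : ℕ} {A B : (Fin 2 → Fin n) → Bool}

theorem matEquiv_of_row_col_perm (σ τ : Equiv.Perm (Fin n))
    (h : ∀ i j, B ![i, j] = A ![σ i, τ j]) : MatEquiv A B := by
  refine ⟨1, ![σ, τ], fun α => ?_⟩
  convert h (α 0) (α 1) using 2 <;> ext k <;> fin_cases k <;> rfl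

theorem IsThreshold.exists_row_threshold_col_weight (hA : IsThreshold A) :
    ∃ a f : Fin n → ℝ, ∀ i j, A ![i, j] = true ↔ a i ≤ f j := by
  obtain ⟨Λ, -, hΛ⟩ := hA
  refine ⟨fun i => 1 - Λ 0 i, Λ 1, fun i j => ?_⟩
  simp [hΛ, Fin.sum_univ_two, add_comm]

/-- The number of ones in row `i` of `A`. It agrees with `rate A 0 i`, but its type records the
bound `n`, so that row sizes range over a set with `n + 1` elements. -/
def rowSize (A : (Fin 2 → Fin n) → Bool) (i : Fin n) : Fin (n + 1) :=
  ⟨#{j | A ![i, j] = true}, Nat.lt_succ_of_le (card_finset_fin_le _)⟩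

/-- The multiset of row sizes of `A`. It determines a threshold matrix up to equivalence, although
it is not invariant under transposition. -/
def rowProfile (A : (Fin 2 → Fin n) → Bool) : Sym (Fin (n + 1)) n :=
  ⟨univ.val.map (rowSize A), by simp⟩

theorem IsThreshold.exists_col_perm_of_rowSize_comp_eq (hA : IsThreshold A) (hB : IsThreshold B)
    {σ : Equiv.Perm (Fin n)} (hσ : rowSize A ∘ σ = rowSize B) :
    ∃ τ : Equiv.Perm (Fin n), ∀ i j, B ![i, j] = A ![σ i, τ j] := by
  obtain ⟨a, f, hf⟩ := hA.exists_row_threshold_col_weight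
  obtain ⟨b, g, hg⟩ := hB.exists_row_threshold_col_weight
  obtain ⟨τ, hτ⟩ := exists_perm_superlevel_iff_of_card_eq f g
  refine ⟨τ, fun i j => ?_⟩
  have card_eq : #{k | a (σ i) ≤ f k} = #{k | b i ≤ g k} := by
    simpa only [rowSize, Function.comp_apply, Fin.mk.injEq, hf, hg] using congrFun hσ i
  rw [Bool.eq_iff_iff, hf, hg, hτ _ _ card_eq]

theorem IsThreshold.matEquiv_of_rowProfile_eq (hA : IsThreshold A) (hB : IsThreshold B)
    (h : rowProfile A = rowProfile B) : MatEquiv A B := by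
  have map_rowSize_eq : univ.val.map (rowSize B) = univ.val.map (rowSize A) :=
    congrArg Subtype.val h.symm
  obtain ⟨σ, hσ⟩ := exists_equiv_comp_eq_of_map_univ_eq map_rowSize_eq
  obtain ⟨τ, hτ⟩ := hA.exists_col_perm_of_rowSize_comp_eq hB hσ
  exact matEquiv_of_row_col_perm σ τ hτ

end TwoDimensional

theorem natCard_sym_fin_succ (n k : ℕ) : Nat.card (Sym (Fin (n + 1)) k) = (n + k).choose k := by
  rw [Nat.card_eq_fintype_card, Sym.card_sym_eq_choose, Fintype.card_fin, Nat.add_right_comm,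
    Nat.add_sub_cancel]

/-- The number of equivalence classes of 2-dimensional threshold matrices of order n is at
most the central binomial coefficient C(2n, n). -/
theorem stmt_14 (n : ℕ) (hn : 1 ≤ n) :
    Nat.card (Quot (fun A B : {A : (Fin 2 → Fin n) → Bool // IsThreshold A} =>
      MatEquiv A.1 B.1)) ≤ Nat.choose (2 * n) n := by
  calc
    _ ≤ Nat.card (Sym (Fin (n + 1)) n) :=
      natCard_quot_le_of_eq_imp_rel (fun A => rowProfile A.1) fun A B =>
        A.2.matEquiv_of_rowProfile_eq B.2
    _ = (2 * n).choose n := by rw [natCard_sym_fin_succ, two_mul]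
end

section
/- Let d ≥ 1 and λ > 0, and let Λ be the constant essential-weight tuple (λ, λ, …, λ) of length d. Then the d×2 table corresponding to Λ is an optimal hyperplane cover of the d-dimensional matrix A(Λ) of order 2 and A(Λ) is extremal if and only if d is odd and λ = 2/(d+1). -/
open Finset

/-!
A constant tuple sees only the number of zero coordinates of an index, so `A(Λ)` is the matrix
whose support consists of the indices with at least `m = ⌈1 / λ⌉` zeros. Pairing a polydiagonal
with the table of constant weight `1 / m` shows that this matrix has a polydiagonal only if
`2 m ≤ d`, and that after adding an index `β` with fewer than `m` zeros there is one only if `β`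
has at most `d - m` zeros. In both cases two antipodal indices attain the bound, so the matrix is
extremal exactly when `2 m = d + 1`. For such `m` the cyclic shifts of an index with `m` zeros,
each of weight `1 / m`, form a polyplex of weight `d / m`, and by linear programming duality the
table of constant weight `λ` is optimal exactly when `λ = 1 / m`.
-/

section Duality

variable {d n : ℕ} {A : (Fin d → Fin n) → Bool} {k : (Fin d → Fin n) → ℝ}
  {Λ : Fin d → Fin n → ℝ} {W : ℝ}

lemma sum_hypSum (k : (Fin d → Fin n) → ℝ) (i : Fin d) : ∑ j, hypSum k i j = ∑ α, k α := by
  simp only [hypSum]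
  exact sum_fiberwise univ (fun α => α i) k

lemma sum_mul_sum_eq_sum_mul_hypSum (k : (Fin d → Fin n) → ℝ) (Λ : Fin d → Fin n → ℝ) :
    ∑ α, k α * ∑ i, Λ i (α i) = ∑ i, ∑ j, Λ i j * hypSum k i j := by
  simp_rw [mul_sum]
  rw [sum_comm]
  refine sum_congr rfl fun i _ => ?_
  rw [← sum_fiberwise univ (fun α => α i)]
  refine sum_congr rfl fun j _ => ?_
  rw [hypSum, mul_sum]
  refine sum_congr rfl fun α hα => ?_
  rw [(mem_filter.mp hα).2, mul_comm]

lemma IsPolyplex.le_coverWeight (hk : IsPolyplex A k W) (hΛ : IsCover A Λ) :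
    W ≤ coverWeight Λ := by
  obtain ⟨hk_nonneg, hk_supp, hk_le, rfl⟩ := hk
  calc ∑ α, k α ≤ ∑ α, k α * ∑ i, Λ i (α i) := sum_le_sum fun α _ => by
        cases hα : A α with
        | false => simp [hk_supp α hα]
        | true => exact le_mul_of_one_le_right (hk_nonneg α) (hΛ.2 α hα)
    _ = ∑ i, ∑ j, Λ i j * hypSum k i j := sum_mul_sum_eq_sum_mul_hypSum k Λ
    _ ≤ coverWeight Λ := sum_le_sum fun i _ => sum_le_sum fun j _ =>
        mul_le_of_le_one_right (hΛ.1 i j) (hk_le i j)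

lemma IsCover.isOptimalCover_of_isPolyplex (hΛ : IsCover A Λ)
    (hk : IsPolyplex A k (coverWeight Λ)) : IsOptimalCover A Λ :=
  ⟨hΛ, fun _ hΛ' => hk.le_coverWeight hΛ'⟩

lemma IsPolydiagonal.sum_mul_sum_eq_coverWeight (hk : IsPolydiagonal A k)
    (Λ : Fin d → Fin n → ℝ) : ∑ α, k α * ∑ i, Λ i (α i) = coverWeight Λ := by
  simp only [sum_mul_sum_eq_sum_mul_hypSum, hk.2.2, mul_one, coverWeight]

variable [NeZero d]

lemma IsPolydiagonal.sum_eq (hk : IsPolydiagonal A k) : ∑ α, k α = n := by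
  simp [← sum_hypSum k 0, hk.2.2]

lemma IsPolydiagonal.le_one (hk : IsPolydiagonal A k) (α : Fin d → Fin n) : k α ≤ 1 :=
  (single_le_sum (fun γ _ => hk.1 γ) (by simp)).trans_eq (hk.2.2 0 (α 0))

lemma HasPolydiagonal.le_coverWeight (hA : HasPolydiagonal A) (hΛ : IsCover A Λ) :
    n ≤ coverWeight Λ := by
  obtain ⟨k, hk⟩ := hA
  exact IsPolyplex.le_coverWeight ⟨hk.1, hk.2.1, fun i j => (hk.2.2 i j).le, hk.sum_eq⟩ hΛ

lemma HasPolydiagonal.le_coverWeight_of_addEntry {β : Fin d → Fin n}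
    (hA : HasPolydiagonal (addEntry A β)) (hΛ : IsCover A Λ) (hβ : ∑ i, Λ i (β i) ≤ 1) :
    n ≤ coverWeight Λ + (1 - ∑ i, Λ i (β i)) := by
  obtain ⟨k, hk⟩ := hA
  set deficit := 1 - ∑ i, Λ i (β i) with deficit_def
  have entry_le (α : Fin d → Fin n) :
      k α ≤ k α * ∑ i, Λ i (α i) + if α = β then k α * deficit else 0 := by
    by_cases hαβ : α = β
    · subst hαβ
      rw [if_pos rfl, deficit_def]
      linarith
    · rw [if_neg hαβ, add_zero]
      cases hα : A α with
      | false => simp [hk.2.1 α (by simp [addEntry, hαβ, hα])]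
      | true => exact le_mul_of_one_le_right (hk.1 α) (hΛ.2 α hα)
  calc (n : ℝ) = ∑ α, k α := hk.sum_eq.symm
    _ ≤ ∑ α, (k α * ∑ i, Λ i (α i) + if α = β then k α * deficit else 0) :=
        sum_le_sum fun α _ => entry_le α
    _ = coverWeight Λ + k β * deficit := by
        simp [sum_add_distrib, hk.sum_mul_sum_eq_coverWeight]
    _ ≤ coverWeight Λ + deficit := by
        gcongr
        exact mul_le_of_le_one_left (sub_nonneg.mpr hβ) (hk.le_one β)

end Duality

section FamilyWeight

variable {d n : ℕ} {ι : Type*} [Fintype ι]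

/-- The weighting of indices that gives weight `c` to every member of the family `δ`, counted
with multiplicity. Polydiagonals and polyplexes are built from it. -/
def familyWeight (c : ℝ) (δ : ι → Fin d → Fin n) (γ : Fin d → Fin n) : ℝ :=
  #{s | δ s = γ} * c

lemma familyWeight_nonneg {c : ℝ} (hc : 0 ≤ c) (δ : ι → Fin d → Fin n) (γ : Fin d → Fin n) :
    0 ≤ familyWeight c δ γ :=
  mul_nonneg (Nat.cast_nonneg _) hc

lemma familyWeight_eq_zero {A : (Fin d → Fin n) → Bool} {δ : ι → Fin d → Fin n}
    (hδ : ∀ s, A (δ s) = true) (c : ℝ) {γ : Fin d → Fin n} (hγ : A γ = false) :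
    familyWeight c δ γ = 0 := by
  have no_member : ∀ s, δ s ≠ γ := by
    rintro s rfl
    simp [hδ s] at hγ
  simp [familyWeight, no_member]

lemma sum_familyWeight (c : ℝ) (δ : ι → Fin d → Fin n) :
    ∑ γ, familyWeight c δ γ = Fintype.card ι * c := by
  simp only [familyWeight]
  rw [← sum_mul, ← Nat.cast_sum, ← card_eq_sum_card_fiberwise (fun _ _ => mem_univ _), card_univ]

lemma hypSum_familyWeight (c : ℝ) (δ : ι → Fin d → Fin n) (i : Fin d) (j : Fin n) :
    hypSum (familyWeight c δ) i j = #{s | δ s i = j} * c := by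
  simp only [hypSum, familyWeight]
  rw [← sum_mul, ← Nat.cast_sum, card_eq_sum_card_fiberwise (f := δ) (t := {γ | γ i = j})
    (fun s hs => by simpa using hs)]
  congr 2
  refine sum_congr rfl fun γ hγ => congrArg card ?_
  ext s
  simp only [mem_filter, mem_univ, true_and] at hγ ⊢
  exact ⟨fun h => ⟨h ▸ hγ, h⟩, And.right⟩

lemma hasPolydiagonal_of_bijective {A : (Fin d → Fin n) → Bool} {δ : Fin n → Fin d → Fin n}
    (hδ : ∀ i, Function.Bijective fun s => δ s i) (hA : ∀ s, A (δ s) = true) :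
    HasPolydiagonal A := by
  refine ⟨familyWeight 1 δ, familyWeight_nonneg zero_le_one δ,
    fun _ => familyWeight_eq_zero hA 1, fun i j => ?_⟩
  have card_eq_one : #{s | δ s i = j} = 1 :=
    (Fintype.existsUnique_iff_card_one _).mp ((hδ i).existsUnique j)
  rw [hypSum_familyWeight, card_eq_one, Nat.cast_one, one_mul]

end FamilyWeight

section CoordCount

variable {d n : ℕ}

/-- The number of coordinates of the index `α` that are equal to `j`. -/
def coordCount (j : Fin n) (α : Fin d → Fin n) : ℕ :=
  #{i | α i = j}

lemma coordCount_comp_perm (j : Fin n) (α : Fin d → Fin n) (σ : Equiv.Perm (Fin d)) :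
    coordCount j (α ∘ σ) = coordCount j α :=
  card_equiv σ (by simp)

lemma coordCount_zero_add_coordCount_one (α : Fin d → Fin 2) :
    coordCount 0 α + coordCount 1 α = d := by
  have := card_eq_sum_card_fiberwise (f := α) (s := univ) (t := univ) (fun _ _ => mem_univ _)
  simpa [Fin.sum_univ_two, coordCount] using this.symm

lemma exists_coordCount_zero_eq {m : ℕ} (hm : m ≤ d) :
    ∃ α : Fin d → Fin 2, coordCount 0 α = m := by
  refine ⟨fun i => if i.val < m then 0 else 1, ?_⟩
  simpa [coordCount, Fin.card_filter_val_lt] using hm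

lemma isPolyplex_familyWeight_rotations [NeZero d] {A : (Fin d → Fin n) → Bool}
    {α : Fin d → Fin n} {c : ℝ} (hc : 0 ≤ c)
    (hA : ∀ s, A (α ∘ Equiv.addRight s) = true) (hα : ∀ j, coordCount j α * c ≤ 1) :
    IsPolyplex A (familyWeight c fun s => α ∘ Equiv.addRight s) (d * c) := by
  refine ⟨familyWeight_nonneg hc _, fun _ => familyWeight_eq_zero hA c, fun i j => ?_, ?_⟩
  · have card_eq : #{s | (α ∘ Equiv.addRight s) i = j} = coordCount j α :=
      coordCount_comp_perm j α (Equiv.addLeft i)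
    rw [hypSum_familyWeight, card_eq]
    exact hα j
  · rw [sum_familyWeight, Fintype.card_fin]

end CoordCount

section Antipode

variable {d : ℕ}

/-- The index antipodal to `α`, with every coordinate flipped; flipping is adding `1` in `Fin 2`. -/
def antipode (α : Fin d → Fin 2) : Fin d → Fin 2 :=
  fun i => α i + 1

lemma coordCount_zero_add_coordCount_zero_antipode (α : Fin d → Fin 2) :
    coordCount 0 α + coordCount 0 (antipode α) = d := by
  have flip_eq_zero_iff : ∀ b : Fin 2, b + 1 = 0 ↔ b = 1 := by decide
  have coordCount_antipode : coordCount 0 (antipode α) = coordCount 1 α := by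
    simp only [coordCount, antipode, flip_eq_zero_iff]
  rw [coordCount_antipode, coordCount_zero_add_coordCount_one]

lemma hasPolydiagonal_of_antipode {A : (Fin d → Fin 2) → Bool} {α : Fin d → Fin 2}
    (hα : A α = true) (hα' : A (antipode α) = true) : HasPolydiagonal A := by
  refine hasPolydiagonal_of_bijective (δ := fun b i => α i + b)
    (fun i => (Equiv.addLeft (α i)).bijective) (Fin.forall_fin_two.mpr ⟨?_, hα'⟩)
  simpa only [add_zero] using hα

end Antipode

section ZeroThreshold

variable {d m : ℕ}

/-- The threshold matrix of a constant essential-weight tuple, described by counting: its support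
is the set of indices with at least `m` zero coordinates. -/
def zeroThresholdMatrix (d m : ℕ) (α : Fin d → Fin 2) : Bool :=
  decide (m ≤ coordCount 0 α)

/-- The table of the constant essential-weight tuple `(c, …, c)`. -/
def constTable (d : ℕ) (c : ℝ) (_ : Fin d) (j : Fin 2) : ℝ :=
  if j = 0 then c else 0

lemma zeroThresholdMatrix_eq_true {α : Fin d → Fin 2} :
    zeroThresholdMatrix d m α = true ↔ m ≤ coordCount 0 α :=
  decide_eq_true_iff

lemma zeroThresholdMatrix_eq_false {α : Fin d → Fin 2} :
    zeroThresholdMatrix d m α = false ↔ coordCount 0 α < m :=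
  decide_eq_false_iff_not.trans not_le

lemma sum_constTable (c : ℝ) (α : Fin d → Fin 2) :
    ∑ i, constTable d c i (α i) = coordCount 0 α * c := by
  simp only [constTable]
  rw [← sum_filter, sum_const, nsmul_eq_mul, coordCount]

lemma coverWeight_constTable (d : ℕ) (c : ℝ) : coverWeight (constTable d c) = d * c := by
  simp [coverWeight, constTable]

lemma eq_zeroThresholdMatrix_ceil {c : ℝ} (hc : 0 < c) {A : (Fin d → Fin 2) → Bool}
    (hA : ∀ α, A α = true ↔ 1 ≤ ∑ i, constTable d c i (α i)) :
    A = zeroThresholdMatrix d ⌈1 / c⌉₊ := by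
  funext α
  rw [Bool.eq_iff_iff, hA, sum_constTable, zeroThresholdMatrix_eq_true, Nat.ceil_le,
    div_le_iff₀ hc]

lemma isCover_constTable_one_div (hm : 0 < m) :
    IsCover (zeroThresholdMatrix d m) (constTable d (1 / m)) := by
  refine ⟨fun i j => ?_, fun α hα => ?_⟩
  · unfold constTable
    positivity
  · rw [sum_constTable, mul_one_div, one_le_div (by positivity), Nat.cast_le]
    exact zeroThresholdMatrix_eq_true.mp hα

lemma IsCover.one_div_le_of_constTable {c : ℝ} (hm : 0 < m) (hmd : m ≤ d)
    (hc : IsCover (zeroThresholdMatrix d m) (constTable d c)) : 1 / m ≤ c := by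
  obtain ⟨α, hα⟩ := exists_coordCount_zero_eq hmd
  have one_le : 1 ≤ m * c := by
    simpa only [sum_constTable, hα] using hc.2 α (zeroThresholdMatrix_eq_true.mpr hα.ge)
  rwa [div_le_iff₀' (by positivity)]

lemma isOptimalCover_constTable_one_div (hm : 0 < m) (hmd : m ≤ d) (hdm : d ≤ 2 * m) :
    IsOptimalCover (zeroThresholdMatrix d m) (constTable d (1 / m)) := by
  have : NeZero d := ⟨by omega⟩
  obtain ⟨α, hα⟩ := exists_coordCount_zero_eq hmd
  have coordCount_le : ∀ j, coordCount j α ≤ m := by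
    have := coordCount_zero_add_coordCount_one α
    exact Fin.forall_fin_two.mpr ⟨by omega, by omega⟩
  refine (isCover_constTable_one_div hm).isOptimalCover_of_isPolyplex
    (k := familyWeight (1 / m) fun s => α ∘ Equiv.addRight s) ?_
  rw [coverWeight_constTable]
  refine isPolyplex_familyWeight_rotations (by positivity) (fun s => ?_) (fun j => ?_)
  · rw [zeroThresholdMatrix_eq_true, coordCount_comp_perm, hα]
  · rw [mul_one_div, div_le_one (by positivity), Nat.cast_le]
    exact coordCount_le j

lemma isOptimalCover_constTable_iff {c : ℝ} (hm : 0 < m) (hmd : m ≤ d) (hdm : d ≤ 2 * m) :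
    IsOptimalCover (zeroThresholdMatrix d m) (constTable d c) ↔ c = 1 / m := by
  refine ⟨fun hc => le_antisymm ?_ (hc.1.one_div_le_of_constTable hm hmd), ?_⟩
  · have weight_le := hc.2 _ (isCover_constTable_one_div hm)
    rw [coverWeight_constTable, coverWeight_constTable] at weight_le
    have d_pos : (0 : ℝ) < d := by exact_mod_cast hm.trans_le hmd
    exact le_of_mul_le_mul_left weight_le d_pos
  · rintro rfl
    exact isOptimalCover_constTable_one_div hm hmd hdm

variable [NeZero d]

lemma hasPolydiagonal_zeroThresholdMatrix_iff (hm : 0 < m) :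
    HasPolydiagonal (zeroThresholdMatrix d m) ↔ 2 * m ≤ d := by
  constructor
  · intro h
    have two_le := h.le_coverWeight (isCover_constTable_one_div hm)
    rw [coverWeight_constTable, mul_one_div, le_div_iff₀ (by positivity)] at two_le
    exact_mod_cast two_le
  · intro hmd
    obtain ⟨α, hα⟩ := exists_coordCount_zero_eq (show m ≤ d by omega)
    have := coordCount_zero_add_coordCount_zero_antipode α
    exact hasPolydiagonal_of_antipode (α := α) (zeroThresholdMatrix_eq_true.mpr hα.ge)
      (zeroThresholdMatrix_eq_true.mpr (by omega))

lemma hasPolydiagonal_addEntry_zeroThresholdMatrix_iff {β : Fin d → Fin 2}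
    (hβ : coordCount 0 β < m) :
    HasPolydiagonal (addEntry (zeroThresholdMatrix d m) β) ↔ m + coordCount 0 β ≤ d := by
  have hm : 0 < m := by omega
  constructor
  · intro h
    have sum_β : ∑ i, constTable d (1 / m) i (β i) = coordCount 0 β / m := by
      rw [sum_constTable, mul_one_div]
    have sum_β_le : (coordCount 0 β / m : ℝ) ≤ 1 := by
      rw [div_le_one (by positivity), Nat.cast_le]
      exact hβ.le
    have two_le := h.le_coverWeight_of_addEntry (isCover_constTable_one_div hm)
      (sum_β.trans_le sum_β_le)
    rw [coverWeight_constTable, sum_β] at two_le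
    field_simp at two_le
    have : (m + coordCount 0 β : ℝ) ≤ d := by
      push_cast at two_le
      linarith
    exact_mod_cast this
  · intro hmd
    have := coordCount_zero_add_coordCount_zero_antipode β
    have antipode_mem : zeroThresholdMatrix d m (antipode β) = true :=
      zeroThresholdMatrix_eq_true.mpr (by omega)
    exact hasPolydiagonal_of_antipode (α := β) (by simp [addEntry])
      (by simp [addEntry, antipode_mem])

lemma isExtremal_zeroThresholdMatrix_iff (hm : 0 < m) :
    IsExtremal (zeroThresholdMatrix d m) ↔ d + 1 = 2 * m := by
  rw [IsExtremal, hasPolydiagonal_zeroThresholdMatrix_iff hm, not_le]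
  constructor
  · rintro ⟨hdm, hadd⟩
    obtain ⟨β, hβ⟩ := exists_coordCount_zero_eq (min_le_right (m - 1) d)
    have hβm : coordCount 0 β < m := by omega
    have := (hasPolydiagonal_addEntry_zeroThresholdMatrix_iff hβm).mp
      (hadd β (zeroThresholdMatrix_eq_false.mpr hβm))
    omega
  · refine fun hdm => ⟨by omega, fun β hβ => ?_⟩
    rw [zeroThresholdMatrix_eq_false] at hβ
    exact (hasPolydiagonal_addEntry_zeroThresholdMatrix_iff hβ).mpr (by omega)

end ZeroThreshold

/-- For the constant essential-weight tuple (λ, ..., λ), the corresponding table is an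
optimal hyperplane cover of A(Λ) with A(Λ) extremal iff d is odd and λ = 2/(d+1). -/
theorem stmt_16 {d : ℕ} (hd : 1 ≤ d) (lam : ℝ) (hlam : 0 < lam)
    (A : (Fin d → Fin 2) → Bool)
    (hA : ∀ α, A α = true ↔ 1 ≤ ∑ i, (if α i = 0 then lam else 0)) :
    (IsOptimalCover A (fun i j => if j = 0 then lam else 0) ∧ IsExtremal A) ↔
      (Odd d ∧ lam = 2 / ((d : ℝ) + 1)) := by
  have : NeZero d := ⟨by omega⟩
  obtain rfl := eq_zeroThresholdMatrix_ceil hlam hA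
  have hm : 0 < ⌈1 / lam⌉₊ := Nat.ceil_pos.mpr (by positivity)
  change IsOptimalCover _ (constTable d lam) ∧ _ ↔ _
  rw [isExtremal_zeroThresholdMatrix_iff hm]
  have two_div_eq {m : ℕ} (hdm : d + 1 = 2 * m) : 2 / ((d : ℝ) + 1) = 1 / m := by
    have : (d : ℝ) + 1 = 2 * m := by exact_mod_cast hdm
    rw [this, div_mul_cancel_left₀ two_ne_zero, one_div]
  constructor
  · rintro ⟨hopt, hdm⟩
    rw [isOptimalCover_constTable_iff hm (by omega) (by omega)] at hopt
    exact ⟨⟨⌈1 / lam⌉₊ - 1, by omega⟩, hopt.trans (two_div_eq hdm).symm⟩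
  · rintro ⟨⟨r, hr⟩, hl⟩
    have hdm : d + 1 = 2 * (r + 1) := by omega
    have hlr : lam = 1 / (r + 1 : ℕ) := hl.trans (two_div_eq hdm)
    have ceil_eq : ⌈1 / lam⌉₊ = r + 1 := by rw [hlr, one_div_one_div, Nat.ceil_natCast]
    rw [ceil_eq, isOptimalCover_constTable_iff (by omega) (by omega) (by omega)]
    exact ⟨hlr, hdm⟩
end
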